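/- arXiv:2502.05412 — 2 statements merged into one kernel-verified Lean document; each statement's English description precedes it below -/
import Mathlib

section
/- Let 𝒜 = (A_1,…,A_m) be an m-tuple of n×n complex matrices. Then max over all complex linear subspaces U ≤ ℂ^n of (dim U − dim 𝒜U) equals one-half of the infimum over all g,h ∈ GL(n,ℂ) of ‖T_{gᴴ𝒜h}(I) − I‖₁ + ‖T*_{gᴴ𝒜h}(I) − I‖₁. (By the Fortin–Reutenauer formula, the left-hand side equals n − nc-rank(A_1x_1+⋯+A_mx_m), so this states that the noncommutative corank equals half the minimum trace-norm scaling residual.) -/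
noncomputable section
open scoped Classical

open Matrix
open scoped ComplexOrder

/-- The completely positive operator `T_𝒜(X) = ∑ k, A k * X * (A k)ᴴ`. -/
def Tcp {m n : ℕ} (A : Fin m → Matrix (Fin n) (Fin n) ℂ)
    (X : Matrix (Fin n) (Fin n) ℂ) : Matrix (Fin n) (Fin n) ℂ :=
  ∑ k, A k * X * (A k)ᴴ

/-- The dual operator `T*_𝒜(X) = ∑ k, (A k)ᴴ * X * A k`. -/
def TcpStar {m n : ℕ} (A : Fin m → Matrix (Fin n) (Fin n) ℂ)
    (X : Matrix (Fin n) (Fin n) ℂ) : Matrix (Fin n) (Fin n) ℂ :=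
  ∑ k, (A k)ᴴ * X * A k

/-- The positive semidefinite square root of a positive semidefinite matrix
(the definition of the older Mathlib, since removed). -/
def Matrix.PosSemidef.sqrt {n 𝕜 : Type*} [Fintype n] [RCLike 𝕜] [DecidableEq n]
    {A : Matrix n n 𝕜} (hA : A.PosSemidef) : Matrix n n 𝕜 :=
  hA.1.eigenvectorUnitary.1 * diagonal ((↑) ∘ Real.sqrt ∘ hA.1.eigenvalues) *
    (star hA.1.eigenvectorUnitary : Matrix n n 𝕜)

/-- The positive semidefinite square root (junk value `0` off PSD matrices). -/
def matSqrt {n : ℕ} (X : Matrix (Fin n) (Fin n) ℂ) : Matrix (Fin n) (Fin n) ℂ :=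
  if h : X.PosSemidef then h.sqrt else 0

/-- Trace norm: sum of singular values, i.e. `tr √(XᴴX)`. -/
def traceNorm {n : ℕ} (X : Matrix (Fin n) (Fin n) ℂ) : ℝ :=
  (matSqrt (Xᴴ * X)).trace.re

/-- `𝒜U = ∑ k, A_k U`. -/
def ASpan {m : ℕ} {ι : Type*} [Fintype ι] [DecidableEq ι]
    (A : Fin m → Matrix ι ι ℂ) (U : Submodule ℂ (ι → ℂ)) : Submodule ℂ (ι → ℂ) :=
  ⨆ k, U.map (A k).mulVecLin

/-!
Lower bound: if `P` and `Q` are the orthogonal projections onto `U` and `𝒜U`, then `Q T(P) = T(P)`,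
so testing `T(1) - 1` against `2Q - 1` and `T*(1) - 1` against `1 - 2P`, both between `-1` and `1`,
bounds the residual below by `2 (dim U - dim 𝒜U)`.

Upper bound: with `c` the noncommutative corank, consider on pairs of positive definite matrices
`Φ(X, Y) = tr(Y T(X)) + c log tr X + c log tr Y - log det X - log det Y`. In eigenbases of `X` and
`Y` the defect form of Hall's theorem gives a matching of size `n - c` in the support of `T`, whose
weights are bounded below by compactness of the unitary group; hence `Φ` is bounded below.
At a near-minimizer, `Y⁻¹` is nearly `T(X) + (c / tr Y) 1` and `X⁻¹` nearly `T*(Y) + (c / tr X) 1`.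
Scaling by `Y = g gᴴ` and `X = h hᴴ` turns these into approximations of the identity, and the two
positive corrections have trace about `c` each, so the residual is about `2c`.
-/

open scoped MatrixOrder

section Scalar

lemma sq_sqrt_sub_one_le {x : ℝ} (hx : 0 < x) : (√x - 1) ^ 2 ≤ x - 1 - Real.log x := by
  have hlog : Real.log x = 2 * Real.log √x := by rw [Real.log_sqrt hx.le]; ring
  nlinarith [Real.log_le_sub_one_of_pos (Real.sqrt_pos.2 hx), Real.sq_sqrt hx.le]

lemma abs_sub_one_le {x r : ℝ} (hx : 0 < x) (hr₀ : 0 ≤ r) (hr₁ : r ≤ 1)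
    (h : x - 1 - Real.log x ≤ r ^ 2) : |x - 1| ≤ 3 * r := by
  have hsqrt : |√x - 1| ≤ r := abs_le.2 (abs_le_of_sq_le_sq' ((sq_sqrt_sub_one_le hx).trans h) hr₀)
  have hfactor : x - 1 = (√x - 1) * (√x + 1) := by nlinarith [Real.sq_sqrt hx.le]
  have hadd : |√x + 1| ≤ 3 := by
    rw [abs_le] at hsqrt ⊢
    constructor <;> linarith
  rw [hfactor, abs_mul, mul_comm 3 r]
  exact mul_le_mul hsqrt hadd (abs_nonneg _) hr₀

end Scalar

section Spectral

variable {ι : Type*} [Fintype ι]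

lemma re_trace_mul_nonneg {X Y : Matrix ι ι ℂ} (hX : X.PosSemidef) (hY : Y.PosSemidef) :
    0 ≤ (X * Y).trace.re := by
  obtain ⟨g, rfl⟩ := CStarAlgebra.nonneg_iff_eq_star_mul_self.1 hY.nonneg
  rw [← Matrix.mul_assoc, trace_mul_cycle, star_eq_conjTranspose]
  exact (Complex.le_def.1 (hX.mul_mul_conjTranspose_same g).trace_nonneg).1

variable [DecidableEq ι]

/-- The Hermitian matrix with eigenvalues `d`, the corresponding eigenvectors being the columns of
the unitary matrix `u`. -/
def spectralMatrix (u : unitaryGroup ι ℂ) (d : ι → ℝ) : Matrix ι ι ℂ :=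
  Unitary.conjStarAlgAut ℂ _ u (diagonal fun i => (d i : ℂ))

lemma spectralMatrix_eq_mul (u : unitaryGroup ι ℂ) (d : ι → ℝ) :
    spectralMatrix u d = (u : Matrix ι ι ℂ) * diagonal (fun i => (d i : ℂ)) * (u : Matrix ι ι ℂ)ᴴ :=
  Unitary.conjStarAlgAut_apply u _

lemma spectralMatrix_mul (u : unitaryGroup ι ℂ) (d e : ι → ℝ) :
    spectralMatrix u d * spectralMatrix u e = spectralMatrix u (d * e) := by
  simp only [spectralMatrix, ← map_mul, diagonal_mul_diagonal, Pi.mul_apply, Complex.ofReal_mul]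

lemma spectralMatrix_one (u : unitaryGroup ι ℂ) : spectralMatrix u 1 = 1 := by
  simp [spectralMatrix]

lemma spectralMatrix_neg (u : unitaryGroup ι ℂ) (d : ι → ℝ) :
    spectralMatrix u (-d) = -spectralMatrix u d := by
  rw [spectralMatrix, spectralMatrix, ← map_neg, diagonal_neg]
  simp

lemma spectralMatrix_sub (u : unitaryGroup ι ℂ) (d e : ι → ℝ) :
    spectralMatrix u (d - e) = spectralMatrix u d - spectralMatrix u e := by
  rw [spectralMatrix, spectralMatrix, spectralMatrix, ← map_sub, diagonal_sub]
  simp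

lemma spectralMatrix_conjTranspose (u : unitaryGroup ι ℂ) (d : ι → ℝ) :
    (spectralMatrix u d)ᴴ = spectralMatrix u d := by
  rw [spectralMatrix, ← star_eq_conjTranspose, ← map_star, star_eq_conjTranspose,
    diagonal_conjTranspose]
  congr 2
  ext i
  simp

lemma spectralMatrix_posSemidef (u : unitaryGroup ι ℂ) {d : ι → ℝ} (hd : 0 ≤ d) :
    (spectralMatrix u d).PosSemidef := by
  rw [spectralMatrix_eq_mul]
  exact (PosSemidef.diagonal fun i => by simpa using hd i).mul_mul_conjTranspose_same _

lemma spectralMatrix_mono (u : unitaryGroup ι ℂ) : Monotone (spectralMatrix u) := fun d e hde => by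
  rw [le_iff, ← spectralMatrix_sub]
  exact spectralMatrix_posSemidef u (sub_nonneg.2 hde)

lemma trace_mul_spectralMatrix (M : Matrix ι ι ℂ) (u : unitaryGroup ι ℂ) (d : ι → ℝ) :
    (M * spectralMatrix u d).trace = ∑ i, ((u : Matrix ι ι ℂ)ᴴ * M * u) i i * d i := by
  rw [spectralMatrix_eq_mul, ← Matrix.mul_assoc, ← Matrix.mul_assoc, trace_mul_comm,
    ← Matrix.mul_assoc, ← Matrix.mul_assoc]
  simp [trace, mul_diagonal]

lemma trace_spectralMatrix (u : unitaryGroup ι ℂ) (d : ι → ℝ) :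
    (spectralMatrix u d).trace = ∑ i, (d i : ℂ) := by
  rw [← Matrix.one_mul (spectralMatrix u d), trace_mul_spectralMatrix, Matrix.mul_one,
    ← star_eq_conjTranspose, Unitary.coe_star_mul_self]
  simp

lemma det_spectralMatrix (u : unitaryGroup ι ℂ) (d : ι → ℝ) :
    (spectralMatrix u d).det = ∏ i, (d i : ℂ) := by
  rw [spectralMatrix_eq_mul, det_mul_right_comm, ← star_eq_conjTranspose,
    Unitary.mul_star_self_of_mem u.2, Matrix.one_mul, det_diagonal]

lemma exists_spectralMatrix_eq_of_isHermitian {H : Matrix ι ι ℂ} (hH : H.IsHermitian) :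
    ∃ (u : unitaryGroup ι ℂ) (d : ι → ℝ), spectralMatrix u d = H :=
  ⟨hH.eigenvectorUnitary, hH.eigenvalues, hH.spectral_theorem.symm⟩

lemma exists_spectralMatrix_eq_of_posDef {X : Matrix ι ι ℂ} (hX : X.PosDef) :
    ∃ (u : unitaryGroup ι ℂ) (d : ι → ℝ), (∀ i, 0 < d i) ∧ spectralMatrix u d = X :=
  ⟨hX.1.eigenvectorUnitary, hX.1.eigenvalues, hX.eigenvalues_pos, hX.1.spectral_theorem.symm⟩

lemma exists_GL_mul_conjTranspose_eq_of_posDef {X : Matrix ι ι ℂ} (hX : X.PosDef) :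
    ∃ g : GL ι ℂ, (g : Matrix ι ι ℂ) * (g : Matrix ι ι ℂ)ᴴ = X := by
  obtain ⟨_, ⟨g, rfl⟩, hg⟩ :=
    CStarAlgebra.isStrictlyPositive_iff_eq_mul_star_self.1 (isStrictlyPositive_iff_posDef.2 hX)
  exact ⟨g, hg.symm⟩

end Spectral

section TraceNorm

variable {n : ℕ}

lemma posSemidef_sqrt_eq_spectralMatrix {X : Matrix (Fin n) (Fin n) ℂ} (hX : X.PosSemidef) :
    hX.sqrt = spectralMatrix hX.1.eigenvectorUnitary (fun i => √(hX.1.eigenvalues i)) :=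
  (spectralMatrix_eq_mul _ _).symm

lemma matSqrt_mul_self {Q : Matrix (Fin n) (Fin n) ℂ} (hQ : Q.PosSemidef) :
    matSqrt (Q * Q) = Q := by
  have hQQ : (Q * Q).PosSemidef := by
    simpa only [hQ.1.eq] using posSemidef_conjTranspose_mul_self Q
  have hsqrt : hQQ.sqrt * hQQ.sqrt = Q * Q := by
    rw [posSemidef_sqrt_eq_spectralMatrix, spectralMatrix_mul]
    exact (congrArg _ (funext fun i => Real.mul_self_sqrt (hQQ.eigenvalues_nonneg i))).trans
      hQQ.1.spectral_theorem.symm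
  have hsqrt_nonneg : hQQ.sqrt.PosSemidef := by
    rw [posSemidef_sqrt_eq_spectralMatrix]
    exact spectralMatrix_posSemidef _ fun i => Real.sqrt_nonneg _
  rw [matSqrt, dif_pos hQQ, ← CFC.sqrt_unique hsqrt hsqrt_nonneg.nonneg,
    CFC.sqrt_unique rfl hQ.nonneg]

lemma traceNorm_spectralMatrix (u : unitaryGroup (Fin n) ℂ) (d : Fin n → ℝ) :
    traceNorm (spectralMatrix u d) = ∑ i, |d i| := by
  have habs : (spectralMatrix u d)ᴴ * spectralMatrix u d =
      spectralMatrix u |d| * spectralMatrix u |d| := by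
    rw [spectralMatrix_conjTranspose, spectralMatrix_mul, spectralMatrix_mul]
    exact congrArg _ (funext fun i => (abs_mul_abs_self (d i)).symm)
  rw [traceNorm, habs, matSqrt_mul_self (spectralMatrix_posSemidef u (abs_nonneg d)),
    trace_spectralMatrix, ← Complex.ofReal_sum, Complex.ofReal_re]
  rfl

lemma re_trace_mul_le_traceNorm {W H : Matrix (Fin n) (Fin n) ℂ} (hW : W ∈ Set.Icc (-1) 1)
    (hH : H.IsHermitian) : (W * H).trace.re ≤ traceNorm H := by
  obtain ⟨u, d, rfl⟩ := exists_spectralMatrix_eq_of_isHermitian hH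
  rw [trace_mul_spectralMatrix, traceNorm_spectralMatrix, Complex.re_sum]
  refine Finset.sum_le_sum fun i _ => ?_
  have hu : star (u : Matrix (Fin n) (Fin n) ℂ) * u = 1 := Unitary.coe_star_mul_self u
  have hlower := (star_left_conjugate_le_conjugate hW.1 (u : Matrix (Fin n) (Fin n) ℂ)).diag_nonneg
    (i := i)
  have hupper := (star_left_conjugate_le_conjugate hW.2 (u : Matrix (Fin n) (Fin n) ℂ)).diag_nonneg
    (i := i)
  rw [mul_neg, neg_mul, mul_one, hu] at hlower
  rw [mul_one, hu] at hupper
  simp only [star_eq_conjTranspose, Matrix.neg_apply,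
    Matrix.sub_apply, one_apply_eq, Complex.le_def, Complex.neg_re, Complex.sub_re, Complex.one_re,
    Complex.zero_re] at hlower hupper
  have hentry : |(((u : Matrix (Fin n) (Fin n) ℂ)ᴴ * W * u) i i).re| ≤ 1 :=
    abs_le.2 ⟨by linarith, by linarith⟩
  calc ((((u : Matrix (Fin n) (Fin n) ℂ)ᴴ * W * u) i i) * d i).re
      = (((u : Matrix (Fin n) (Fin n) ℂ)ᴴ * W * u) i i).re * d i := Complex.re_mul_ofReal _ _
    _ ≤ |(((u : Matrix (Fin n) (Fin n) ℂ)ᴴ * W * u) i i).re| * |d i| := by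
        rw [← abs_mul]; exact le_abs_self _
    _ ≤ |d i| := mul_le_of_le_one_left (abs_nonneg _) hentry

lemma exists_re_trace_mul_eq_traceNorm {H : Matrix (Fin n) (Fin n) ℂ} (hH : H.IsHermitian) :
    ∃ W ∈ Set.Icc (-1 : Matrix (Fin n) (Fin n) ℂ) 1, (W * H).trace.re = traceNorm H := by
  obtain ⟨u, d, rfl⟩ := exists_spectralMatrix_eq_of_isHermitian hH
  refine ⟨spectralMatrix u fun i => SignType.sign (d i), ⟨?_, ?_⟩, ?_⟩
  · rw [← spectralMatrix_one u, ← spectralMatrix_neg]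
    exact spectralMatrix_mono u fun i => by
      cases SignType.sign (d i) <;> norm_num
  · rw [← spectralMatrix_one u]
    exact spectralMatrix_mono u fun i => by
      cases SignType.sign (d i) <;> norm_num
  · rw [spectralMatrix_mul, trace_spectralMatrix, traceNorm_spectralMatrix, ← Complex.ofReal_sum,
      Complex.ofReal_re]
    exact Finset.sum_congr rfl fun i _ => sign_mul_self (d i)

lemma traceNorm_le_traceNorm_add_add_trace {H P : Matrix (Fin n) (Fin n) ℂ} (hH : H.IsHermitian)
    (hP : P.PosSemidef) : traceNorm H ≤ traceNorm (H + P) + P.trace.re := by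
  obtain ⟨W, hW, hWH⟩ := exists_re_trace_mul_eq_traceNorm hH
  have hadd := re_trace_mul_le_traceNorm hW (hH.add hP.1)
  have hpos := re_trace_mul_nonneg hW.1 hP
  rw [← hWH]
  simp only [sub_neg_eq_add, Matrix.add_mul, Matrix.mul_add, Matrix.one_mul, trace_add,
    Complex.add_re] at hadd hpos
  linarith

end TraceNorm

section SteinLoss

variable {ι : Type*} [Fintype ι] [DecidableEq ι]

/-- The logarithm of the absolute value of the determinant, with the junk value `0` on singular
matrices. -/
def logDet (X : Matrix ι ι ℂ) : ℝ :=
  Real.log ‖X.det‖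

lemma logDet_mul {X Y : Matrix ι ι ℂ} (hX : X.det ≠ 0) (hY : Y.det ≠ 0) :
    logDet (X * Y) = logDet X + logDet Y := by
  rw [logDet, det_mul, norm_mul, Real.log_mul (norm_ne_zero_iff.2 hX) (norm_ne_zero_iff.2 hY),
    logDet, logDet]

lemma logDet_inv (X : Matrix ι ι ℂ) : logDet X⁻¹ = -logDet X := by
  rw [logDet, det_nonsing_inv, Ring.inverse_eq_inv', norm_inv, Real.log_inv, logDet]

lemma logDet_spectralMatrix (u : unitaryGroup ι ℂ) {d : ι → ℝ} (hd : ∀ i, 0 < d i) :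
    logDet (spectralMatrix u d) = ∑ i, Real.log (d i) := by
  rw [logDet, det_spectralMatrix, norm_prod, Real.log_prod fun i _ => by simpa using (hd i).ne']
  exact Finset.sum_congr rfl fun i _ => by rw [Complex.norm_of_nonneg (hd i).le]

/-- Stein's loss `tr M - log |det M| - n`, the Bregman divergence from `M` to `1` of `-log det`. -/
def steinLoss (M : Matrix ι ι ℂ) : ℝ :=
  M.trace.re - logDet M - Fintype.card ι

lemma steinLoss_spectralMatrix (u : unitaryGroup ι ℂ) {d : ι → ℝ} (hd : ∀ i, 0 < d i) :
    steinLoss (spectralMatrix u d) = ∑ i, (d i - 1 - Real.log (d i)) := by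
  rw [steinLoss, trace_spectralMatrix, logDet_spectralMatrix u hd, ← Complex.ofReal_sum,
    Complex.ofReal_re, Finset.sum_sub_distrib, Finset.sum_sub_distrib, Finset.sum_const,
    Finset.card_univ, nsmul_one]
  ring

lemma steinLoss_mul_comm (M N : Matrix ι ι ℂ) : steinLoss (M * N) = steinLoss (N * M) := by
  rw [steinLoss, steinLoss, logDet, logDet, trace_mul_comm, det_mul_comm]

lemma steinLoss_nonneg {M : Matrix ι ι ℂ} (hM : M.PosDef) : 0 ≤ steinLoss M := by
  obtain ⟨u, d, hd, rfl⟩ := exists_spectralMatrix_eq_of_posDef hM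
  rw [steinLoss_spectralMatrix u hd]
  exact Finset.sum_nonneg fun i _ => sub_nonneg.2 (Real.log_le_sub_one_of_pos (hd i))

lemma posDef_conjTranspose_mul_mul_GL {M : Matrix ι ι ℂ} (hM : M.PosDef) (g : GL ι ℂ) :
    ((g : Matrix ι ι ℂ)ᴴ * M * g).PosDef :=
  hM.conjTranspose_mul_mul_same (mulVec_injective_of_isUnit g.isUnit)

lemma steinLoss_mul_nonneg {X Y : Matrix ι ι ℂ} (hX : X.PosDef) (hY : Y.PosDef) :
    0 ≤ steinLoss (X * Y) := by
  obtain ⟨g, rfl⟩ := exists_GL_mul_conjTranspose_eq_of_posDef hX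
  rw [Matrix.mul_assoc, steinLoss_mul_comm]
  exact steinLoss_nonneg (posDef_conjTranspose_mul_mul_GL hY g)

lemma traceNorm_sub_one_le {n : ℕ} {M : Matrix (Fin n) (Fin n) ℂ} (hM : M.PosDef) {r : ℝ}
    (hr₀ : 0 ≤ r) (hr₁ : r ≤ 1) (h : steinLoss M ≤ r ^ 2) : traceNorm (M - 1) ≤ n * (3 * r) := by
  obtain ⟨u, d, hd, rfl⟩ := exists_spectralMatrix_eq_of_posDef hM
  rw [steinLoss_spectralMatrix u hd] at h
  have hterm (i : Fin n) : d i - 1 - Real.log (d i) ≤ r ^ 2 :=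
    (Finset.single_le_sum (fun j _ => sub_nonneg.2 (Real.log_le_sub_one_of_pos (hd j)))
      (Finset.mem_univ i)).trans h
  rw [← spectralMatrix_one u, ← spectralMatrix_sub, traceNorm_spectralMatrix]
  simpa using Finset.sum_le_card_nsmul Finset.univ _ _
    fun i _ => abs_sub_one_le (hd i) hr₀ hr₁ (hterm i)

end SteinLoss

section CompletelyPositive

variable {m n : ℕ}

/-- The scaled tuple `gᴴ𝒜h`, with `g` and `h` arbitrary square matrices. -/
def scale (A : Fin m → Matrix (Fin n) (Fin n) ℂ) (g h : Matrix (Fin n) (Fin n) ℂ) :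
    Fin m → Matrix (Fin n) (Fin n) ℂ :=
  fun k => gᴴ * A k * h

lemma TcpStar_eq_Tcp_conjTranspose (A : Fin m → Matrix (Fin n) (Fin n) ℂ) :
    TcpStar A = Tcp fun k => (A k)ᴴ := by
  ext1 X
  simp only [TcpStar, Tcp, conjTranspose_conjTranspose]

lemma Tcp_scale (A : Fin m → Matrix (Fin n) (Fin n) ℂ) (g h X : Matrix (Fin n) (Fin n) ℂ) :
    Tcp (scale A g h) X = gᴴ * Tcp A (h * X * hᴴ) * g := by
  simp only [Tcp, scale, Matrix.mul_sum, Matrix.sum_mul, conjTranspose_mul,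
    conjTranspose_conjTranspose, Matrix.mul_assoc]

lemma Tcp_sub (A : Fin m → Matrix (Fin n) (Fin n) ℂ) (X Y : Matrix (Fin n) (Fin n) ℂ) :
    Tcp A (X - Y) = Tcp A X - Tcp A Y := by
  simp only [Tcp, Matrix.mul_sub, Matrix.sub_mul, Finset.sum_sub_distrib]

lemma Tcp_posSemidef (A : Fin m → Matrix (Fin n) (Fin n) ℂ) {X : Matrix (Fin n) (Fin n) ℂ}
    (hX : X.PosSemidef) : (Tcp A X).PosSemidef :=
  posSemidef_sum _ fun k _ => hX.mul_mul_conjTranspose_same (A k)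

lemma TcpStar_posSemidef (A : Fin m → Matrix (Fin n) (Fin n) ℂ) {X : Matrix (Fin n) (Fin n) ℂ}
    (hX : X.PosSemidef) : (TcpStar A X).PosSemidef :=
  posSemidef_sum _ fun k _ => hX.conjTranspose_mul_mul_same (A k)

lemma trace_mul_TcpStar (A : Fin m → Matrix (Fin n) (Fin n) ℂ) (X Y : Matrix (Fin n) (Fin n) ℂ) :
    (X * TcpStar A Y).trace = (Y * Tcp A X).trace := by
  simp only [Tcp, TcpStar, Matrix.mul_sum, trace_sum]
  refine Finset.sum_congr rfl fun k _ => ?_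
  rw [← Matrix.mul_assoc, ← Matrix.mul_assoc, trace_mul_comm, trace_mul_comm Y]
  simp only [Matrix.mul_assoc]

/-- The trace-norm scaling residual `‖T_ℬ(1) - 1‖₁ + ‖T*_ℬ(1) - 1‖₁`, which vanishes exactly when
`ℬ` is doubly stochastic. -/
def scalingResidual (B : Fin m → Matrix (Fin n) (Fin n) ℂ) : ℝ :=
  traceNorm (Tcp B 1 - 1) + traceNorm (TcpStar B 1 - 1)

end CompletelyPositive

section NcCorank

variable {m n : ℕ}

/-- The noncommutative corank `max_U (dim U - dim 𝒜U)`. Truncated subtraction changes nothing,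
because `U = ⊥` contributes `0`. -/
def ncCorank (A : Fin m → Matrix (Fin n) (Fin n) ℂ) : ℕ :=
  ⨆ U : Submodule ℂ (Fin n → ℂ), (Module.finrank ℂ U - Module.finrank ℂ (ASpan A U))

lemma bddAbove_finrank_sub_finrank_ASpan (A : Fin m → Matrix (Fin n) (Fin n) ℂ) :
    BddAbove (Set.range fun U : Submodule ℂ (Fin n → ℂ) =>
      Module.finrank ℂ U - Module.finrank ℂ (ASpan A U)) := by
  refine ⟨n, Set.forall_mem_range.2 fun U => (Nat.sub_le _ _).trans ?_⟩
  simpa using U.finrank_le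

lemma finrank_le_finrank_ASpan_add_ncCorank (A : Fin m → Matrix (Fin n) (Fin n) ℂ)
    (U : Submodule ℂ (Fin n → ℂ)) :
    Module.finrank ℂ U ≤ Module.finrank ℂ (ASpan A U) + ncCorank A :=
  Nat.sub_le_iff_le_add'.1 (le_ciSup (bddAbove_finrank_sub_finrank_ASpan A) U)

lemma exists_finrank_eq_finrank_ASpan_add_ncCorank (A : Fin m → Matrix (Fin n) (Fin n) ℂ) :
    ∃ U : Submodule ℂ (Fin n → ℂ),
      Module.finrank ℂ U = Module.finrank ℂ (ASpan A U) + ncCorank A := by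
  by_cases hzero : ncCorank A = 0
  · have hbot : ASpan A ⊥ = ⊥ := by simp only [ASpan, Submodule.map_bot, iSup_bot]
    exact ⟨⊥, by rw [hbot, hzero, add_zero]⟩
  · obtain ⟨U, hU⟩ := Nat.sSup_mem (Set.range_nonempty _) (bddAbove_finrank_sub_finrank_ASpan A)
    have hmax : Module.finrank ℂ U - Module.finrank ℂ (ASpan A U) = ncCorank A := hU
    exact ⟨U, by omega⟩

lemma ncCorank_le (A : Fin m → Matrix (Fin n) (Fin n) ℂ) : ncCorank A ≤ n := by
  obtain ⟨U, hU⟩ := exists_finrank_eq_finrank_ASpan_add_ncCorank A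
  have hle : Module.finrank ℂ U ≤ n := by simpa using U.finrank_le
  omega

lemma iSup_finrank_sub_finrank_ASpan (A : Fin m → Matrix (Fin n) (Fin n) ℂ) :
    (⨆ U : Submodule ℂ (Fin n → ℂ),
      ((Module.finrank ℂ U : ℝ) - (Module.finrank ℂ (ASpan A U) : ℝ))) = ncCorank A := by
  obtain ⟨U, hU⟩ := exists_finrank_eq_finrank_ASpan_add_ncCorank A
  refine IsLUB.ciSup_eq (IsGreatest.isLUB ⟨⟨U, ?_⟩, Set.forall_mem_range.2 fun V => ?_⟩)
  · simp [hU]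
  · rw [sub_le_iff_le_add']
    exact_mod_cast finrank_le_finrank_ASpan_add_ncCorank A V

lemma ASpan_scale (A : Fin m → Matrix (Fin n) (Fin n) ℂ) (g h : Matrix (Fin n) (Fin n) ℂ)
    (U : Submodule ℂ (Fin n → ℂ)) :
    ASpan (scale A g h) U = (ASpan A (U.map h.mulVecLin)).map gᴴ.mulVecLin := by
  simp only [ASpan, scale, Submodule.map_iSup, mulVecLin_mul, Submodule.map_comp]

lemma ncCorank_scale (A : Fin m → Matrix (Fin n) (Fin n) ℂ) {g h : Matrix (Fin n) (Fin n) ℂ}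
    (hg : IsUnit g) (hh : IsUnit h) : ncCorank (scale A g h) = ncCorank A := by
  have hfinrank {M : Matrix (Fin n) (Fin n) ℂ} (hM : IsUnit M) (U : Submodule ℂ (Fin n → ℂ)) :
      Module.finrank ℂ (U.map M.mulVecLin) = Module.finrank ℂ U :=
    (Submodule.equivMapOfInjective M.mulVecLin (mulVec_injective_of_isUnit hM) U).finrank_eq.symm
  have hsurj : Function.Surjective (Submodule.map h.mulVecLin) :=
    Submodule.map_surjective_of_surjective (mulVec_surjective_iff_isUnit.2 hh)
  refine (iSup_congr fun U => ?_).trans (hsurj.iSup_comp _)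
  rw [ASpan_scale, ← star_eq_conjTranspose, hfinrank hg.star, hfinrank hh]

end NcCorank

section Projection

variable {ι : Type*} [Fintype ι]

lemma exists_isStarProjection_isProj (V : Submodule ℂ (ι → ℂ)) :
    ∃ P : Matrix ι ι ℂ, IsStarProjection P ∧ LinearMap.IsProj V P.mulVecLin := by
  let e := (WithLp.linearEquiv 2 ℂ (ι → ℂ)).toLinearMap
  let E : Matrix ι ι ℂ ≃⋆ₐ[ℂ] _ := toEuclideanCLM
  let P := E.symm (V.comap e).starProjection
  have hP (v : ι → ℂ) : P *ᵥ v = ((V.comap e).starProjection (WithLp.toLp 2 v)).ofLp := by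
    rw [← ofLp_toEuclideanCLM]
    exact congrArg (fun f => (f (WithLp.toLp 2 v)).ofLp) (E.apply_symm_apply _)
  refine ⟨P, isStarProjection_starProjection.map E.symm, ⟨fun v => ?_, fun v hv => ?_⟩⟩
  · rw [mulVecLin_apply, hP]
    exact Submodule.starProjection_apply_mem (V.comap e) _
  · rw [mulVecLin_apply, hP, Submodule.starProjection_eq_self_iff.2 (by exact hv)]

lemma trace_eq_finrank_of_isProj {V : Submodule ℂ (ι → ℂ)} {P : Matrix ι ι ℂ}
    (hP : LinearMap.IsProj V P.mulVecLin) : P.trace = Module.finrank ℂ V := by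
  rw [← hP.trace, ← toLin'_apply', trace_toLin'_eq]

lemma two_smul_sub_one_mem_Icc [DecidableEq ι] {P : Matrix ι ι ℂ} (hP : IsStarProjection P) :
    2 • P - 1 ∈ Set.Icc (-1 : Matrix ι ι ℂ) 1 := by
  constructor
  · rw [le_sub_iff_add_le, neg_add_cancel]
    exact nsmul_nonneg hP.nonneg 2
  · rw [sub_le_iff_le_add, ← two_nsmul]
    exact nsmul_le_nsmul_right hP.le_one 2

end Projection

section LowerBound

variable {m n : ℕ}

lemma mul_Tcp_eq_of_isProj {B : Fin m → Matrix (Fin n) (Fin n) ℂ} {U : Submodule ℂ (Fin n → ℂ)}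
    {P Q : Matrix (Fin n) (Fin n) ℂ} (hP : LinearMap.IsProj U P.mulVecLin)
    (hQ : LinearMap.IsProj (ASpan B U) Q.mulVecLin) : Q * Tcp B P = Tcp B P := by
  have hQBP (k : Fin m) : Q * (B k * P) = B k * P := by
    refine ext_of_mulVec_single fun j => ?_
    rw [← mulVec_mulVec]
    refine hQ.map_id _ (Submodule.mem_iSup_of_mem k ?_)
    rw [← mulVec_mulVec]
    exact Submodule.mem_map_of_mem (f := (B k).mulVecLin) (hP.map_mem _)
  rw [Tcp, Matrix.mul_sum]
  exact Finset.sum_congr rfl fun k _ => by rw [← Matrix.mul_assoc, hQBP]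

lemma finrank_sub_finrank_ASpan_le_scalingResidual (B : Fin m → Matrix (Fin n) (Fin n) ℂ)
    (U : Submodule ℂ (Fin n → ℂ)) :
    2 * ((Module.finrank ℂ U : ℝ) - Module.finrank ℂ (ASpan B U)) ≤ scalingResidual B := by
  obtain ⟨P, hP, hPU⟩ := exists_isStarProjection_isProj U
  obtain ⟨Q, hQ, hQU⟩ := exists_isStarProjection_isProj (ASpan B U)
  have hT := Tcp_posSemidef B PosSemidef.one
  have hTstar := TcpStar_posSemidef B PosSemidef.one
  have hleft := re_trace_mul_le_traceNorm (two_smul_sub_one_mem_Icc hQ)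
    (hT.1.sub isHermitian_one)
  have hright := re_trace_mul_le_traceNorm (two_smul_sub_one_mem_Icc hP.one_sub)
    (hTstar.1.sub isHermitian_one)
  have hcompress : (P * TcpStar B 1).trace.re ≤ (Q * Tcp B 1).trace.re := by
    have hQT := re_trace_mul_nonneg hQ.nonneg.posSemidef
      (Tcp_posSemidef B hP.one_sub_nonneg.posSemidef)
    rw [Tcp_sub, Matrix.mul_sub, trace_sub, Complex.sub_re, mul_Tcp_eq_of_isProj hPU hQU] at hQT
    rw [trace_mul_TcpStar, Matrix.one_mul]
    linarith
  have htrace : (TcpStar B 1).trace = (Tcp B 1).trace := by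
    simpa only [Matrix.one_mul] using trace_mul_TcpStar B 1 1
  simp only [two_nsmul, Matrix.sub_mul, Matrix.add_mul, Matrix.mul_sub, Matrix.one_mul,
    Matrix.mul_one, trace_sub, trace_add, trace_eq_finrank_of_isProj hPU,
    trace_eq_finrank_of_isProj hQU, htrace, Complex.sub_re, Complex.add_re, Complex.natCast_re]
    at hleft hright
  rw [scalingResidual]
  linarith

lemma two_mul_ncCorank_le_scalingResidual (B : Fin m → Matrix (Fin n) (Fin n) ℂ) :
    2 * (ncCorank B : ℝ) ≤ scalingResidual B := by
  rw [← iSup_finrank_sub_finrank_ASpan, ← le_div_iff₀' two_pos]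
  exact ciSup_le fun U =>
    (le_div_iff₀' two_pos).2 (finrank_sub_finrank_ASpan_le_scalingResidual B U)

end LowerBound

section Hall

variable {ι : Type*} [Fintype ι] [DecidableEq ι]

lemma exists_injOn_of_card_le_card_biUnion_add {t : ι → Finset ι} {c : ℕ}
    (hc : c ≤ Fintype.card ι) (ht : ∀ S : Finset ι, S.card ≤ (S.biUnion t).card + c) :
    ∃ (I : Finset ι) (f : ι → ι), Iᶜ.card = c ∧ Set.InjOn f I ∧ ∀ i ∈ I, f i ∈ t i := by
  have hHall (S : Finset ι) :
      S.card ≤ (S.biUnion fun i => (t i).disjSum (Finset.univ : Finset (Fin c))).card := by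
    rcases S.eq_empty_or_nonempty with rfl | hS
    · simp
    · have hunion : (S.biUnion fun i => (t i).disjSum (Finset.univ : Finset (Fin c))) =
          (S.biUnion t).disjSum Finset.univ := by
        ext (j | k) <;> simp [hS.exists_mem]
      simpa [hunion, Finset.card_disjSum] using ht S
  obtain ⟨f, hf, hft⟩ := (Finset.all_card_le_biUnion_card_iff_exists_injective _).1 hHall
  set J : Finset ι := {i | ∃ j, f i = Sum.inl j} with hJ
  have hJc : Jᶜ.card ≤ c := by
    have himage : Jᶜ.image f ⊆ Finset.univ.map Function.Embedding.inr := by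
      simp only [Finset.image_subset_iff, hJ, Finset.mem_compl, Finset.mem_filter_univ]
      intro i hi
      rcases hfi : f i with j | k
      · exact absurd ⟨j, hfi⟩ hi
      · simp
    simpa [Finset.card_image_of_injective _ hf] using Finset.card_le_card himage
  obtain ⟨I, hIJ, hI⟩ := Finset.exists_subset_card_eq (s := J) (n := Fintype.card ι - c)
    (by rw [Finset.card_compl] at hJc; omega)
  have hfI {i : ι} (hi : i ∈ I) : f i = Sum.inl (Sum.elim id (fun _ => i) (f i)) := by
    obtain ⟨j, hj⟩ := (Finset.mem_filter_univ i).1 (hIJ hi)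
    simp [hj]
  refine ⟨I, fun i => Sum.elim id (fun _ => i) (f i), ?_, fun i hi j hj hij => hf ?_,
    fun i hi => ?_⟩
  · rw [Finset.card_compl, hI]
    omega
  · rw [hfI hi, hfI hj]
    exact congrArg Sum.inl hij
  · have hmem := hft i
    rw [hfI hi, Finset.inl_mem_disjSum] at hmem
    exact hmem

lemma exists_perm_of_card_le_card_biUnion_add {t : ι → Finset ι} {c : ℕ}
    (hc : c ≤ Fintype.card ι) (ht : ∀ S : Finset ι, S.card ≤ (S.biUnion t).card + c) :
    ∃ (I : Finset ι) (σ : Equiv.Perm ι), Iᶜ.card = c ∧ ∀ i ∈ I, σ i ∈ t i := by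
  obtain ⟨I, f, hI, hf, hft⟩ := exists_injOn_of_card_le_card_biUnion_add hc ht
  obtain ⟨σ, hσ⟩ :=
    Finset.exists_equiv_extend_of_card_eq (t := Finset.univ) rfl (Finset.subset_univ _) hf
  refine ⟨I, σ.trans (Equiv.subtypeUnivEquiv Finset.mem_univ), hI, fun i hi => ?_⟩
  rw [Equiv.trans_apply, Equiv.subtypeUnivEquiv_apply, hσ i hi]
  exact hft i hi

end Hall

section Compactness

lemma exists_pos_forall_exists_le_of_isCompact {X P : Type*} [TopologicalSpace X] [Finite P]
    {K : Set X} (hK : IsCompact K) {f : P → X → ℝ} (hf : ∀ p, Continuous (f p))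
    (hpos : ∀ x ∈ K, ∃ p, 0 < f p x) : ∃ κ > 0, ∀ x ∈ K, ∃ p, κ ≤ f p x := by
  have := Fintype.ofFinite P
  rcases K.eq_empty_or_nonempty with rfl | ⟨x₀, hx₀⟩
  · exact ⟨1, one_pos, by simp⟩
  have hP : (Finset.univ : Finset P).Nonempty := ⟨(hpos x₀ hx₀).choose, Finset.mem_univ _⟩
  obtain ⟨x, hx, hmin⟩ := hK.exists_isMinOn ⟨x₀, hx₀⟩
    (Continuous.finset_sup'_apply hP fun p _ => hf p).continuousOn
  refine ⟨Finset.univ.sup' hP (f · x), ?_, fun y hy => ?_⟩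
  · obtain ⟨p, hp⟩ := hpos x hx
    exact hp.trans_le (Finset.le_sup' (f · x) (Finset.mem_univ p))
  · obtain ⟨p, -, hp⟩ := Finset.exists_mem_eq_sup' hP (f · y)
    exact ⟨p, hp ▸ hmin hy⟩

lemma isCompact_unitaryGroup {ι : Type*} [Fintype ι] [DecidableEq ι] :
    IsCompact (unitaryGroup ι ℂ : Set (Matrix ι ι ℂ)) := by
  have hclosed : IsClosed (unitaryGroup ι ℂ : Set (Matrix ι ι ℂ)) := isClosed_unitary
  refine (isCompact_univ_pi fun _ => isCompact_univ_pi fun _ =>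
    isCompact_closedBall (0 : ℂ) 1).of_isClosed_subset hclosed fun u hu => ?_
  simp only [Set.mem_univ_pi, mem_closedBall_zero_iff]
  exact fun i j => entry_norm_bound_of_unitary hu i j

end Compactness

section Potential

variable {m n : ℕ}

/-- The potential minimised by operator Sinkhorn scaling, in which the terms
`c * log tr X + c * log tr Y` compensate for a noncommutative corank `c`. -/
def potential (A : Fin m → Matrix (Fin n) (Fin n) ℂ) (c : ℝ) (X Y : Matrix (Fin n) (Fin n) ℂ) : ℝ :=
  (Y * Tcp A X).trace.re + c * Real.log X.trace.re + c * Real.log Y.trace.re - logDet X - logDet Y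

lemma potential_conjTranspose_comm (A : Fin m → Matrix (Fin n) (Fin n) ℂ) (c : ℝ)
    (X Y : Matrix (Fin n) (Fin n) ℂ) :
    potential (fun k => (A k)ᴴ) c Y X = potential A c X Y := by
  rw [potential, potential, ← TcpStar_eq_Tcp_conjTranspose, trace_mul_TcpStar]
  ring

/-- The weight of the edge `i → j` in the bipartite graph between the columns and the rows of the
tuple `B`: an edge is present exactly when its weight is positive. -/
def edgeWeight (B : Fin m → Matrix (Fin n) (Fin n) ℂ) (i j : Fin n) : ℝ :=
  ∑ k, ‖B k j i‖ ^ 2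

lemma edgeWeight_nonneg (B : Fin m → Matrix (Fin n) (Fin n) ℂ) (i j : Fin n) :
    0 ≤ edgeWeight B i j := by
  unfold edgeWeight
  positivity

lemma Tcp_diagonal_apply_self (B : Fin m → Matrix (Fin n) (Fin n) ℂ) (x : Fin n → ℝ) (j : Fin n) :
    Tcp B (diagonal fun i => (x i : ℂ)) j j = ∑ i, (edgeWeight B i j * x i : ℝ) := by
  have hentry (k : Fin m) : (B k * diagonal (fun i => (x i : ℂ)) * (B k)ᴴ) j j =
      ∑ i, ((‖B k j i‖ ^ 2 * x i : ℝ) : ℂ) := by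
    rw [mul_apply]
    refine Finset.sum_congr rfl fun i _ => ?_
    rw [mul_diagonal, conjTranspose_apply, mul_right_comm, ← starRingEnd_apply, Complex.mul_conj']
    push_cast
    rfl
  simp only [Tcp, Matrix.sum_apply, hentry, edgeWeight, Finset.sum_mul, ← Complex.ofReal_sum]
  rw [Finset.sum_comm]

lemma trace_mul_Tcp_spectralMatrix (A : Fin m → Matrix (Fin n) (Fin n) ℂ)
    (u v : unitaryGroup (Fin n) ℂ) (x y : Fin n → ℝ) :
    (spectralMatrix v y * Tcp A (spectralMatrix u x)).trace.re =
      ∑ j, ∑ i, edgeWeight (scale A v u) i j * x i * y j := by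
  rw [trace_mul_comm, trace_mul_spectralMatrix, spectralMatrix_eq_mul, ← Tcp_scale, Complex.re_sum]
  simp only [Tcp_diagonal_apply_self, Complex.re_mul_ofReal,
    Complex.ofReal_re, Finset.sum_mul]

lemma card_le_card_edges_add_ncCorank (B : Fin m → Matrix (Fin n) (Fin n) ℂ)
    (S : Finset (Fin n)) :
    S.card ≤ (S.biUnion fun i => {j | 0 < edgeWeight B i j}).card + ncCorank B := by
  set N := S.biUnion fun i => ({j | 0 < edgeWeight B i j} : Finset (Fin n)) with hN
  have hspan : ASpan B (Pi.spanSubset ℂ (S : Set (Fin n))) ≤ Pi.spanSubset ℂ (N : Set (Fin n)) := by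
    refine iSup_le fun k => Submodule.map_le_iff_le_comap.2 fun v hv => ?_
    refine Pi.mem_spanSubset_iff.2 fun j hj => ?_
    refine (Finset.sum_eq_zero fun i _ => ?_ : ∑ i, B k j i * v i = 0)
    by_cases hi : i ∈ S
    · have hzero : edgeWeight B i j = 0 := by
        refine le_antisymm (not_lt.1 fun hpos => hj ?_) (edgeWeight_nonneg B i j)
        simpa [hN] using ⟨i, hi, hpos⟩
      have hentry := (Finset.sum_eq_zero_iff_of_nonneg fun k _ => by positivity).1 hzero k
        (Finset.mem_univ k)
      simp_all
    · rw [Pi.mem_spanSubset_iff.1 hv i hi, mul_zero]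
  have hfinrank := finrank_le_finrank_ASpan_add_ncCorank B (Pi.spanSubset ℂ (S : Set (Fin n)))
  have hmono := Submodule.finrank_mono hspan
  simp only [Pi.dim_spanSubset, Set.ncard_coe_finset] at hfinrank hmono
  omega

lemma exists_perm_prod_edgeWeight_pos (B : Fin m → Matrix (Fin n) (Fin n) ℂ) :
    ∃ (I : Finset (Fin n)) (σ : Equiv.Perm (Fin n)),
      Iᶜ.card = ncCorank B ∧ 0 < ∏ i ∈ I, edgeWeight B i (σ i) := by
  obtain ⟨I, σ, hI, hσ⟩ := exists_perm_of_card_le_card_biUnion_add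
    (by simpa using ncCorank_le B) (card_le_card_edges_add_ncCorank B)
  exact ⟨I, σ, hI, Finset.prod_pos fun i hi => by simpa using hσ i hi⟩

lemma exists_pos_forall_exists_le_prod_edgeWeight (A : Fin m → Matrix (Fin n) (Fin n) ℂ) :
    ∃ κ > 0, ∀ u v : unitaryGroup (Fin n) ℂ, ∃ (I : Finset (Fin n)) (σ : Equiv.Perm (Fin n)),
      Iᶜ.card = ncCorank A ∧ κ ≤ ∏ i ∈ I, edgeWeight (scale A v u) i (σ i) := by
  have hpos : ∀ uv ∈ (unitaryGroup (Fin n) ℂ : Set (Matrix (Fin n) (Fin n) ℂ)) ×ˢ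
      (unitaryGroup (Fin n) ℂ : Set (Matrix (Fin n) (Fin n) ℂ)),
      ∃ p : {I : Finset (Fin n) // Iᶜ.card = ncCorank A} × Equiv.Perm (Fin n),
        0 < ∏ i ∈ p.1.1, edgeWeight (scale A uv.2 uv.1) i (p.2 i) := by
    rintro ⟨u, v⟩ ⟨hu, hv⟩
    obtain ⟨I, σ, hI, hσ⟩ := exists_perm_prod_edgeWeight_pos (scale A v u)
    rw [ncCorank_scale A (Unitary.isUnit_coe (U := ⟨v, hv⟩))
      (Unitary.isUnit_coe (U := ⟨u, hu⟩))] at hI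
    exact ⟨⟨⟨I, hI⟩, σ⟩, hσ⟩
  obtain ⟨κ, hκ, hbound⟩ := exists_pos_forall_exists_le_of_isCompact
    (isCompact_unitaryGroup.prod isCompact_unitaryGroup)
    (fun p => by unfold edgeWeight scale; fun_prop) hpos
  refine ⟨κ, hκ, fun u v => ?_⟩
  obtain ⟨p, hp⟩ := hbound (u, v) ⟨u.2, v.2⟩
  exact ⟨p.1, p.2, p.1.2, hp⟩

lemma log_le_of_le_prod_perm {ι : Type*} [Fintype ι] [DecidableEq ι] {w : ι → ι → ℝ} {x y : ι → ℝ}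
    {κ : ℝ} {I : Finset ι} {σ : Equiv.Perm ι} (hw : ∀ i j, 0 ≤ w i j) (hx : ∀ i, 0 < x i)
    (hy : ∀ j, 0 < y j) (hκ : 0 < κ) (hprod : κ ≤ ∏ i ∈ I, w i (σ i)) :
    Real.log κ ≤ ∑ j, ∑ i, w i j * x i * y j + Iᶜ.card * Real.log (∑ i, x i) +
      Iᶜ.card * Real.log (∑ j, y j) - ∑ i, Real.log (x i) - ∑ j, Real.log (y j) := by
  have hw_ne : ∀ i ∈ I, w i (σ i) ≠ 0 := Finset.prod_ne_zero_iff.1 (hκ.trans_le hprod).ne'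
  have hlogκ : Real.log κ ≤ ∑ i ∈ I, Real.log (w i (σ i)) := by
    rw [← Real.log_prod hw_ne]
    exact Real.log_le_log hκ hprod
  have hmatched : ∑ i ∈ I, (Real.log (w i (σ i)) + Real.log (x i) + Real.log (y (σ i))) ≤
      ∑ j, ∑ i, w i j * x i * y j := by
    have hpos (i j : ι) : 0 ≤ w i j * x i * y j :=
      mul_nonneg (mul_nonneg (hw i j) (hx i).le) (hy j).le
    calc ∑ i ∈ I, (Real.log (w i (σ i)) + Real.log (x i) + Real.log (y (σ i)))
        ≤ ∑ i ∈ I, w i (σ i) * x i * y (σ i) := Finset.sum_le_sum fun i hi => by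
          rw [← Real.log_mul (hw_ne i hi) (hx i).ne',
            ← Real.log_mul (mul_ne_zero (hw_ne i hi) (hx i).ne') (hy _).ne']
          exact Real.log_le_self (hpos i (σ i))
      _ ≤ ∑ i, w i (σ i) * x i * y (σ i) :=
          Finset.sum_le_univ_sum_of_nonneg fun i => hpos i (σ i)
      _ ≤ ∑ i, ∑ j, w i j * x i * y j := Finset.sum_le_sum fun i _ =>
          Finset.single_le_sum (fun j _ => hpos i j) (Finset.mem_univ (σ i))
      _ = ∑ j, ∑ i, w i j * x i * y j := Finset.sum_comm
  have hunmatched : ∑ i ∈ Iᶜ, (Real.log (x i) + Real.log (y (σ i))) ≤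
      Iᶜ.card * (Real.log (∑ i, x i) + Real.log (∑ j, y j)) := by
    rw [← nsmul_eq_mul]
    exact Finset.sum_le_card_nsmul _ _ _ fun i _ => add_le_add
      (Real.log_le_log (hx i) (Finset.single_le_sum (fun j _ => (hx j).le) (Finset.mem_univ i)))
      (Real.log_le_log (hy _) (Finset.single_le_sum (fun j _ => (hy j).le) (Finset.mem_univ _)))
  have hsplit : ∑ i, Real.log (x i) + ∑ j, Real.log (y j) =
      ∑ i ∈ I, (Real.log (x i) + Real.log (y (σ i))) +
        ∑ i ∈ Iᶜ, (Real.log (x i) + Real.log (y (σ i))) := by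
    rw [Finset.sum_add_sum_compl, Finset.sum_add_distrib, Equiv.sum_comp σ fun j => Real.log (y j)]
  simp only [Finset.sum_add_distrib] at hmatched hunmatched hsplit
  linarith

lemma exists_forall_le_potential (A : Fin m → Matrix (Fin n) (Fin n) ℂ) :
    ∃ b : ℝ, ∀ X Y : Matrix (Fin n) (Fin n) ℂ, X.PosDef → Y.PosDef →
      b ≤ potential A (ncCorank A) X Y := by
  obtain ⟨κ, hκ, hmatching⟩ := exists_pos_forall_exists_le_prod_edgeWeight A
  refine ⟨Real.log κ, fun X Y hX hY => ?_⟩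
  obtain ⟨u, x, hx, rfl⟩ := exists_spectralMatrix_eq_of_posDef hX
  obtain ⟨v, y, hy, rfl⟩ := exists_spectralMatrix_eq_of_posDef hY
  obtain ⟨I, σ, hI, hσ⟩ := hmatching u v
  rw [potential, trace_mul_Tcp_spectralMatrix, trace_spectralMatrix, trace_spectralMatrix,
    logDet_spectralMatrix u hx, logDet_spectralMatrix v hy, ← hI, ← Complex.ofReal_sum,
    ← Complex.ofReal_sum, Complex.ofReal_re, Complex.ofReal_re]
  exact log_le_of_le_prod_perm (edgeWeight_nonneg _) hx hy hκ hσ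

end Potential

section ShiftedTcp

variable {m n : ℕ}

/-- The operator `T_A(X) + (c / tr Y) • 1`, which is the gradient in `Y` of
`potential A c X Y + logDet Y`, so that it equals `Y⁻¹` at a critical point of the potential. -/
def shiftedTcp (A : Fin m → Matrix (Fin n) (Fin n) ℂ) (c : ℝ) (X Y : Matrix (Fin n) (Fin n) ℂ) :
    Matrix (Fin n) (Fin n) ℂ :=
  Tcp A X + ((c / Y.trace.re : ℝ) : ℂ) • 1

lemma re_trace_mul_shiftedTcp (A : Fin m → Matrix (Fin n) (Fin n) ℂ) (c : ℝ)
    (X Y Z : Matrix (Fin n) (Fin n) ℂ) :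
    (Z * shiftedTcp A c X Y).trace.re =
      (Z * Tcp A X).trace.re + c / Y.trace.re * Z.trace.re := by
  rw [shiftedTcp, Matrix.mul_add, mul_smul_comm, Matrix.mul_one, trace_add, trace_smul,
    Complex.add_re, smul_eq_mul, Complex.re_ofReal_mul]

lemma re_trace_pos_of_posDef [NeZero n] {X : Matrix (Fin n) (Fin n) ℂ} (hX : X.PosDef) :
    0 < X.trace.re :=
  (Complex.pos_iff.1 hX.trace_pos).1

lemma dotProduct_Tcp_mulVec (A : Fin m → Matrix (Fin n) (Fin n) ℂ) (X : Matrix (Fin n) (Fin n) ℂ)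
    (v : Fin n → ℂ) :
    star v ⬝ᵥ (Tcp A X *ᵥ v) = ∑ k, star ((A k)ᴴ *ᵥ v) ⬝ᵥ (X *ᵥ ((A k)ᴴ *ᵥ v)) := by
  rw [Tcp, sum_mulVec, dotProduct_sum]
  refine Finset.sum_congr rfl fun k _ => ?_
  rw [star_mulVec, conjTranspose_conjTranspose, ← dotProduct_mulVec, mulVec_mulVec, mulVec_mulVec,
    Matrix.mul_assoc]

lemma Tcp_posDef {A : Fin m → Matrix (Fin n) (Fin n) ℂ} {X : Matrix (Fin n) (Fin n) ℂ}
    (hX : X.PosDef) (hA : ∀ v : Fin n → ℂ, (∀ k, (A k)ᴴ *ᵥ v = 0) → v = 0) : (Tcp A X).PosDef := by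
  refine .of_dotProduct_mulVec_pos (Tcp_posSemidef A hX.posSemidef).1 fun v hv => ?_
  obtain ⟨k, hk⟩ : ∃ k, (A k)ᴴ *ᵥ v ≠ 0 := by
    contrapose! hv
    exact hA v hv
  rw [dotProduct_Tcp_mulVec]
  exact Finset.sum_pos' (fun k _ => hX.posSemidef.dotProduct_mulVec_nonneg _)
    ⟨k, Finset.mem_univ k, hX.dotProduct_mulVec_pos hk⟩

lemma eq_zero_of_forall_mulVec_eq_zero {A : Fin m → Matrix (Fin n) (Fin n) ℂ}
    (hA : ncCorank A = 0) {v : Fin n → ℂ} (hv : ∀ k, A k *ᵥ v = 0) : v = 0 := by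
  have hbot : ASpan A (Submodule.span ℂ {v}) = ⊥ := by
    simp only [ASpan, Submodule.map_span, Set.image_singleton, mulVecLin_apply, hv,
      Submodule.span_zero_singleton, iSup_bot]
  have hle := finrank_le_finrank_ASpan_add_ncCorank A (Submodule.span ℂ {v})
  rw [hbot, finrank_bot, hA, Nat.le_zero, Submodule.finrank_eq_zero,
    Submodule.span_singleton_eq_bot] at hle
  exact hle

lemma eq_zero_of_forall_conjTranspose_mulVec_eq_zero {A : Fin m → Matrix (Fin n) (Fin n) ℂ}
    (hA : ncCorank A = 0) {v : Fin n → ℂ} (hv : ∀ k, (A k)ᴴ *ᵥ v = 0) : v = 0 := by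
  have hle := finrank_le_finrank_ASpan_add_ncCorank A ⊤
  rw [hA, add_zero, finrank_top] at hle
  have htop : ASpan A ⊤ = ⊤ :=
    Submodule.eq_top_of_finrank_eq ((Submodule.finrank_le _).antisymm hle)
  have hker : ASpan A ⊤ ≤ LinearMap.ker (dotProductBilin ℂ ℂ (star v)) := by
    refine iSup_le fun k => Submodule.map_le_iff_le_comap.2 fun w _ => ?_
    have hvA : star v ᵥ* A k = 0 := by
      rw [← conjTranspose_conjTranspose (A k), ← star_mulVec, hv, star_zero]
    change star v ⬝ᵥ (A k *ᵥ w) = 0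
    rw [dotProduct_mulVec, hvA, zero_dotProduct]
  exact dotProduct_star_self_eq_zero.1 (hker (htop.ge Submodule.mem_top))

lemma shiftedTcp_posDef [NeZero n] {A : Fin m → Matrix (Fin n) (Fin n) ℂ} {c : ℝ} (hc : 0 ≤ c)
    (hA : c = 0 → ∀ v : Fin n → ℂ, (∀ k, (A k)ᴴ *ᵥ v = 0) → v = 0)
    {X Y : Matrix (Fin n) (Fin n) ℂ} (hX : X.PosDef) (hY : Y.PosDef) :
    (shiftedTcp A c X Y).PosDef := by
  rcases hc.eq_or_lt with rfl | hc
  · simpa [shiftedTcp] using Tcp_posDef hX (hA rfl)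
  · refine .posSemidef_add (Tcp_posSemidef A hX.posSemidef) (PosDef.one.smul ?_)
    exact_mod_cast div_pos hc (re_trace_pos_of_posDef hY)

lemma potential_eq_potential_shiftedTcp_inv_add [NeZero n] {A : Fin m → Matrix (Fin n) (Fin n) ℂ}
    {c : ℝ} {X Y : Matrix (Fin n) (Fin n) ℂ} (hY : Y.PosDef) (hR : (shiftedTcp A c X Y).PosDef) :
    potential A c X Y = potential A c X (shiftedTcp A c X Y)⁻¹ +
      steinLoss (Y * shiftedTcp A c X Y) + c * ((shiftedTcp A c X Y)⁻¹.trace.re / Y.trace.re - 1 -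
        Real.log ((shiftedTcp A c X Y)⁻¹.trace.re / Y.trace.re)) := by
  have hYR := re_trace_mul_shiftedTcp A c X Y Y
  have hRinvR := re_trace_mul_shiftedTcp A c X Y (shiftedTcp A c X Y)⁻¹
  set R := shiftedTcp A c X Y
  have htrY := re_trace_pos_of_posDef hY
  have htrR := re_trace_pos_of_posDef hR.inv
  rw [nonsing_inv_mul _ hR.det_pos.ne'.isUnit, trace_one, Fintype.card_fin, Complex.natCast_re]
    at hRinvR
  rw [div_mul_cancel₀ _ htrY.ne'] at hYR
  rw [potential, potential, steinLoss, logDet_inv, logDet_mul hY.det_pos.ne' hR.det_pos.ne', hYR,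
    Real.log_div htrR.ne' htrY.ne', Fintype.card_fin, hRinvR]
  ring

lemma traceNorm_Tcp_scale_sub_one_le {A : Fin m → Matrix (Fin n) (Fin n) ℂ} {c : ℝ} (hc : 0 ≤ c)
    {Y : Matrix (Fin n) (Fin n) ℂ} (hY : 0 ≤ Y.trace.re) (g h : Matrix (Fin n) (Fin n) ℂ) :
    traceNorm (Tcp (scale A g h) 1 - 1) ≤ traceNorm (gᴴ * shiftedTcp A c (h * hᴴ) Y * g - 1) +
      c * ((g * gᴴ).trace.re / Y.trace.re) := by
  have hshift : ((((c / Y.trace.re : ℝ) : ℂ)) • (gᴴ * g)).PosSemidef :=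
    (posSemidef_conjTranspose_mul_self g).smul (by exact_mod_cast div_nonneg hc hY)
  have hadd : Tcp (scale A g h) 1 - 1 + ((c / Y.trace.re : ℝ) : ℂ) • (gᴴ * g) =
      gᴴ * shiftedTcp A c (h * hᴴ) Y * g - 1 := by
    rw [Tcp_scale, shiftedTcp, Matrix.mul_one, Matrix.mul_add, Matrix.add_mul, mul_smul_comm,
      smul_mul_assoc, Matrix.mul_one, sub_add_eq_add_sub]
  have htrace : (((c / Y.trace.re : ℝ) : ℂ) • (gᴴ * g)).trace.re =
      c * ((g * gᴴ).trace.re / Y.trace.re) := by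
    rw [trace_smul, smul_eq_mul, Complex.re_ofReal_mul, trace_mul_comm, mul_comm_div]
  rw [← htrace, ← hadd]
  exact traceNorm_le_traceNorm_add_add_trace
    ((Tcp_posSemidef _ PosSemidef.one).1.sub isHermitian_one) hshift

end ShiftedTcp

section UpperBound

variable {m n : ℕ}

lemma exists_forall_potential_le_add (A : Fin m → Matrix (Fin n) (Fin n) ℂ) {δ : ℝ} (hδ : 0 < δ) :
    ∃ X Y : Matrix (Fin n) (Fin n) ℂ, X.PosDef ∧ Y.PosDef ∧
      ∀ X' Y' : Matrix (Fin n) (Fin n) ℂ, X'.PosDef → Y'.PosDef →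
        potential A (ncCorank A) X Y ≤ potential A (ncCorank A) X' Y' + δ := by
  obtain ⟨b, hb⟩ := exists_forall_le_potential A
  let F (Z : {X : Matrix (Fin n) (Fin n) ℂ // X.PosDef} ×
      {Y : Matrix (Fin n) (Fin n) ℂ // Y.PosDef}) : ℝ := potential A (ncCorank A) Z.1 Z.2
  have hbdd : BddBelow (Set.range F) :=
    ⟨b, Set.forall_mem_range.2 fun Z => hb Z.1 Z.2 Z.1.2 Z.2.2⟩
  have : Nonempty {X : Matrix (Fin n) (Fin n) ℂ // X.PosDef} := ⟨⟨1, PosDef.one⟩⟩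
  obtain ⟨Z, hZ⟩ := exists_lt_of_ciInf_lt (lt_add_of_pos_right (iInf F) hδ)
  exact ⟨Z.1, Z.2, Z.1.2, Z.2.2, fun X' Y' hX' hY' =>
    hZ.le.trans (by gcongr; exact ciInf_le hbdd (⟨X', hX'⟩, ⟨Y', hY'⟩))⟩

lemma conjTranspose_scale (A : Fin m → Matrix (Fin n) (Fin n) ℂ) (g h : Matrix (Fin n) (Fin n) ℂ) :
    (fun k => (scale A g h k)ᴴ) = scale (fun k => (A k)ᴴ) h g := by
  ext1 k
  simp only [scale, conjTranspose_mul, conjTranspose_conjTranspose, Matrix.mul_assoc]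

lemma steinLoss_le_and_mul_trace_div_le [NeZero n] {A : Fin m → Matrix (Fin n) (Fin n) ℂ} {c : ℕ}
    {X Y : Matrix (Fin n) (Fin n) ℂ} (hY : Y.PosDef) (hR : (shiftedTcp A c X Y).PosDef) {r : ℝ}
    (hr₀ : 0 ≤ r) (hr₁ : r ≤ 1)
    (hmin : potential A c X Y ≤ potential A c X (shiftedTcp A c X Y)⁻¹ + r ^ 2) :
    steinLoss (Y * shiftedTcp A c X Y) ≤ r ^ 2 ∧
      c * ((shiftedTcp A c X Y)⁻¹.trace.re / Y.trace.re) ≤ c * (1 + 3 * r) := by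
  rw [potential_eq_potential_shiftedTcp_inv_add hY hR, add_assoc, add_le_add_iff_left] at hmin
  have hloss := steinLoss_mul_nonneg hY hR
  have hμ := div_pos (re_trace_pos_of_posDef hR.inv) (re_trace_pos_of_posDef hY)
  set μ := (shiftedTcp A c X Y)⁻¹.trace.re / Y.trace.re
  have hlog : 0 ≤ μ - 1 - Real.log μ := sub_nonneg.2 (Real.log_le_sub_one_of_pos hμ)
  refine ⟨by linarith [mul_nonneg c.cast_nonneg hlog], ?_⟩
  rcases c.eq_zero_or_pos with rfl | hc
  · simp
  · have hμr : μ - 1 - Real.log μ ≤ r ^ 2 :=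
      (le_mul_of_one_le_left hlog (Nat.one_le_cast.2 hc)).trans (by linarith)
    gcongr
    linarith [(abs_le.1 (abs_sub_one_le hμ hr₀ hr₁ hμr)).2]

lemma potential_shiftedTcp_inv_le [NeZero n] {A : Fin m → Matrix (Fin n) (Fin n) ℂ} {c : ℝ}
    (hc : 0 ≤ c) {X Y : Matrix (Fin n) (Fin n) ℂ} (hY : Y.PosDef)
    (hR : (shiftedTcp A c X Y).PosDef) :
    potential A c X (shiftedTcp A c X Y)⁻¹ ≤ potential A c X Y := by
  rw [potential_eq_potential_shiftedTcp_inv_add hY hR, add_assoc]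
  have hμ := div_pos (re_trace_pos_of_posDef hR.inv) (re_trace_pos_of_posDef hY)
  exact le_add_of_nonneg_right (add_nonneg (steinLoss_mul_nonneg hY hR)
    (mul_nonneg hc (sub_nonneg.2 (Real.log_le_sub_one_of_pos hμ))))

lemma exists_near_critical [NeZero n] (A : Fin m → Matrix (Fin n) (Fin n) ℂ) {r : ℝ}
    (hr₀ : 0 < r) (hr₁ : r ≤ 1) :
    ∃ X Y Z : Matrix (Fin n) (Fin n) ℂ, X.PosDef ∧ Y.PosDef ∧ Z.PosDef ∧
      Y * shiftedTcp A (ncCorank A) X Z = 1 ∧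
      ncCorank A * (Y.trace.re / Z.trace.re) ≤ ncCorank A * (1 + 3 * r) ∧
      (shiftedTcp (fun k => (A k)ᴴ) (ncCorank A) Y X).PosDef ∧
      steinLoss (X * shiftedTcp (fun k => (A k)ᴴ) (ncCorank A) Y X) ≤ r ^ 2 := by
  have hc : (0 : ℝ) ≤ ncCorank A := Nat.cast_nonneg _
  obtain ⟨X, Z, hX, hZ, hmin⟩ := exists_forall_potential_le_add A (sq_pos_of_pos hr₀)
  have hR : (shiftedTcp A (ncCorank A) X Z).PosDef := shiftedTcp_posDef hc
    (fun h v => eq_zero_of_forall_conjTranspose_mulVec_eq_zero (Nat.cast_eq_zero.1 h)) hX hZ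
  have htrace := (steinLoss_le_and_mul_trace_div_le hZ hR hr₀.le hr₁ (hmin _ _ hX hR.inv)).2
  have hdescent := potential_shiftedTcp_inv_le hc hZ hR
  set Y := (shiftedTcp A (ncCorank A) X Z)⁻¹
  have hS : (shiftedTcp (fun k => (A k)ᴴ) (ncCorank A) Y X).PosDef := shiftedTcp_posDef hc
    (fun h v => by simpa only [conjTranspose_conjTranspose] using
      eq_zero_of_forall_mulVec_eq_zero (Nat.cast_eq_zero.1 h)) hR.inv hX
  refine ⟨X, Y, Z, hX, hR.inv, hZ, nonsing_inv_mul _ hR.det_pos.ne'.isUnit, htrace, hS,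
    (steinLoss_le_and_mul_trace_div_le hX hS hr₀.le hr₁ ?_).1⟩
  rw [potential_conjTranspose_comm, potential_conjTranspose_comm]
  exact hdescent.trans (hmin _ _ hS.inv hR.inv)

lemma exists_scalingResidual_le [NeZero n] (A : Fin m → Matrix (Fin n) (Fin n) ℂ) {r : ℝ}
    (hr₀ : 0 < r) (hr₁ : r ≤ 1) :
    ∃ g h : GL (Fin n) ℂ,
      scalingResidual (scale A g h) ≤ 2 * ncCorank A + 3 * (n + ncCorank A) * r := by
  have hc : (0 : ℝ) ≤ ncCorank A := Nat.cast_nonneg _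
  obtain ⟨X, Y, Z, hX, hY, hZ, hYR, htrace, hS, hloss⟩ := exists_near_critical A hr₀ hr₁
  have htrX := re_trace_pos_of_posDef hX
  obtain ⟨g, rfl⟩ := exists_GL_mul_conjTranspose_eq_of_posDef hY
  obtain ⟨h, rfl⟩ := exists_GL_mul_conjTranspose_eq_of_posDef hX
  refine ⟨g, h, ?_⟩
  have hleft := traceNorm_Tcp_scale_sub_one_le hc (A := A) (re_trace_pos_of_posDef hZ).le g h
  have hright := traceNorm_Tcp_scale_sub_one_le hc (A := fun k => (A k)ᴴ) htrX.le h g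
  have hgRg : (g : Matrix (Fin n) (Fin n) ℂ)ᴴ * shiftedTcp A (ncCorank A)
      ((h : Matrix (Fin n) (Fin n) ℂ) * (h : Matrix (Fin n) (Fin n) ℂ)ᴴ) Z * g = 1 := by
    rw [Matrix.mul_assoc] at hYR
    exact mul_eq_one_comm.1 hYR
  have hzero : traceNorm (0 : Matrix (Fin n) (Fin n) ℂ) = 0 := by
    simpa [spectralMatrix] using traceNorm_spectralMatrix (1 : unitaryGroup (Fin n) ℂ) 0
  have hnear := traceNorm_sub_one_le (posDef_conjTranspose_mul_mul_GL hS h) hr₀.le hr₁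
    (by rwa [steinLoss_mul_comm, ← Matrix.mul_assoc])
  rw [hgRg, sub_self, hzero] at hleft
  rw [← conjTranspose_scale, ← TcpStar_eq_Tcp_conjTranspose, div_self htrX.ne'] at hright
  rw [scalingResidual]
  linarith

lemma iInf_scalingResidual_scale (A : Fin m → Matrix (Fin n) (Fin n) ℂ) :
    ⨅ gh : GL (Fin n) ℂ × GL (Fin n) ℂ, scalingResidual (scale A gh.1 gh.2) = 2 * ncCorank A := by
  have hlower (gh : GL (Fin n) ℂ × GL (Fin n) ℂ) :
      2 * (ncCorank A : ℝ) ≤ scalingResidual (scale A gh.1 gh.2) := by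
    rw [← ncCorank_scale A gh.1.isUnit gh.2.isUnit]
    exact two_mul_ncCorank_le_scalingResidual _
  have hbdd : BddBelow (Set.range fun gh : GL (Fin n) ℂ × GL (Fin n) ℂ =>
      scalingResidual (scale A gh.1 gh.2)) := ⟨_, Set.forall_mem_range.2 hlower⟩
  refine le_antisymm ?_ (le_ciInf hlower)
  rcases n.eq_zero_or_pos with rfl | hn
  · exact (ciInf_le hbdd 1).trans (by simp [scalingResidual, traceNorm, trace])
  have : NeZero n := ⟨hn.ne'⟩
  have hupper {r : ℝ} (hr₀ : 0 < r) (hr₁ : r ≤ 1) :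
      ⨅ gh : GL (Fin n) ℂ × GL (Fin n) ℂ, scalingResidual (scale A gh.1 gh.2) ≤
        2 * ncCorank A + 3 * (n + ncCorank A) * r := by
    obtain ⟨g, h, hgh⟩ := exists_scalingResidual_le A hr₀ hr₁
    exact (ciInf_le hbdd (g, h)).trans hgh
  have htendsto : Filter.Tendsto (fun r : ℝ => 2 * ncCorank A + 3 * (n + ncCorank A) * r)
      (nhdsWithin 0 (Set.Ioi 0)) (nhds (2 * ncCorank A)) :=
    tendsto_nhdsWithin_of_tendsto_nhds (Continuous.tendsto' (by fun_prop) _ _ (by simp))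
  refine ge_of_tendsto htendsto ?_
  filter_upwards [Ioc_mem_nhdsGT one_pos] with r hr using hupper hr.1 hr.2

end UpperBound

/-- The nc-corank `max_U (dim U - dim 𝒜U)` equals one-half of the minimum
trace-norm scaling residual. -/
theorem ncCorank_eq_half_inf_traceNorm_residual {m n : ℕ}
    (A : Fin m → Matrix (Fin n) (Fin n) ℂ) :
    (⨆ U : Submodule ℂ (Fin n → ℂ),
        ((Module.finrank ℂ U : ℝ) - (Module.finrank ℂ (ASpan A U) : ℝ)))
      = (1 / 2) *
        ⨅ gh : GL (Fin n) ℂ × GL (Fin n) ℂ,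
          (traceNorm (Tcp (fun k => (↑gh.1)ᴴ * A k * (↑gh.2 : Matrix (Fin n) (Fin n) ℂ)) 1 - 1)
            + traceNorm
              (TcpStar (fun k => (↑gh.1)ᴴ * A k * (↑gh.2 : Matrix (Fin n) (Fin n) ℂ)) 1 - 1)) := by
  rw [iSup_finrank_sub_finrank_ASpan]
  change _ = 1 / 2 * ⨅ gh : GL (Fin n) ℂ × GL (Fin n) ℂ, scalingResidual (scale A gh.1 gh.2)
  rw [iInf_scalingResidual_scale]
  ring
end
end

section
/- Let 𝒜 = (A_1,…,A_m) be an m-tuple of n×n complex matrices such that Σ_{k=1}^m A_k A_kᴴ is positive definite, and let f(X) := log det(Σ_{k=1}^m A_k X A_kᴴ) − log det X on positive definite Hermitian X. Let H = u (diag λ) uᴴ be Hermitian, where u is unitary, λ ∈ ℝ^n with λ_1 ≥ λ_2 ≥ ⋯ ≥ λ_n, and set λ_{n+1} := 0. For i = 1,…,n, let U_i ≤ ℂ^n be the span of the first i columns of u. Then lim_{t→∞} (f(e^{tH}) − f(I))/t = Σ_{i=1}^n (λ_i − λ_{i+1}) (dim 𝒜U_i − dim U_i). -/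
noncomputable section
open scoped Classical
open Matrix Filter
open scoped ComplexOrder Topology

/-- `f(X) = log det (∑ k, A_k X A_kᴴ) - log det X`. -/
def fdet {m n : ℕ} (A : Fin m → Matrix (Fin n) (Fin n) ℂ)
    (X : Matrix (Fin n) (Fin n) ℂ) : ℝ :=
  Real.log (Tcp A X).det.re - Real.log X.det.re

/-- The span of the first `j` columns of `u`. -/
def colSpan {n : ℕ} (u : Matrix (Fin n) (Fin n) ℂ) (j : ℕ) : Submodule ℂ (Fin n → ℂ) :=
  Submodule.span ℂ {w : Fin n → ℂ | ∃ k : Fin n, (k : ℕ) < j ∧ w = fun r => u r k}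

/-!
Writing `W` for the block row `(A₁u, …, A_mu)` and giving each of its columns the eigenvalue
`λ_j` of the column of `u` it comes from, the Cauchy–Binet formula turns `det T_𝒜(e^{tH})` into
`∑_S |det W_S|² e^{t λ(S)}`, so that its logarithm grows like `t` times the largest weight `λ(S)`
of a nonsingular maximal minor. An exchange argument (Cramer's rule) shows that a minor of maximal
weight contains a basis of the span of all columns of weight at least `a`, for every `a`; Abel
summation then rewrites its weight in terms of the dimensions of these spans, which are the `𝒜U_i`.
-/

section CauchyBinet

variable {ι C R : Type*} [Fintype ι] [DecidableEq ι] [Fintype C] [CommRing R]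

theorem det_mul_eq_sum_prod_mul_det_submatrix (M : Matrix ι C R) (N : Matrix C ι R) :
    (M * N).det = ∑ τ : ι → C, (∏ r, N (τ r) r) * (M.submatrix id τ).det := by
  have hrow : (M * N)ᵀ = fun r => ∑ c, N c r • Mᵀ c := by
    ext r s
    simp [Matrix.mul_apply, mul_comm]
  calc (M * N).det = detRowAlternating.toMultilinearMap fun r => ∑ c, N c r • Mᵀ c := by
        rw [← det_transpose, hrow]; rfl
    _ = ∑ τ : ι → C, (∏ r, N (τ r) r) * (M.submatrix id τ).det := by
        rw [MultilinearMap.map_sum]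
        refine Finset.sum_congr rfl fun τ _ => ?_
        rw [MultilinearMap.map_smul_univ, smul_eq_mul, ← det_transpose (M.submatrix id τ)]
        rfl

theorem exists_det_submatrix_ne_zero {M : Matrix ι C R} {N : Matrix C ι R}
    (h : (M * N).det ≠ 0) : ∃ τ : ι → C, (M.submatrix id τ).det ≠ 0 := by
  contrapose! h
  simp [det_mul_eq_sum_prod_mul_det_submatrix, h]

/-- The sum runs over all maps `ι → C` rather than over the `#ι`-element subsets of `C`: maps that
are not injective contribute `0`, and each subset is counted `(#ι)!` times. -/
theorem factorial_mul_det_mul_eq_sum_det_mul_det (M : Matrix ι C R) (N : Matrix C ι R) :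
    ((Fintype.card ι).factorial : R) * (M * N).det =
      ∑ τ : ι → C, (M.submatrix id τ).det * (N.submatrix τ id).det := by
  have sum_perm (π : Equiv.Perm ι) :
      ∑ τ : ι → C, (M.submatrix id τ).det * (Equiv.Perm.sign π * ∏ r, N (τ (π r)) r) =
        (M * N).det := by
    rw [det_mul_eq_sum_prod_mul_det_submatrix]
    refine Fintype.sum_equiv (Equiv.arrowCongr π⁻¹ (Equiv.refl C)) _ _ fun τ => ?_
    have hsign : (M.submatrix id (τ ∘ π)).det = Equiv.Perm.sign π * (M.submatrix id τ).det :=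
      det_permute' π (M.submatrix id τ)
    change _ = (∏ r, N (τ (π r)) r) * (M.submatrix id (τ ∘ π)).det
    rw [hsign]
    ring
  calc ((Fintype.card ι).factorial : R) * (M * N).det
      = ∑ _π : Equiv.Perm ι, (M * N).det := by simp [Fintype.card_perm]
    _ = ∑ τ : ι → C, ∑ π : Equiv.Perm ι,
          (M.submatrix id τ).det * (Equiv.Perm.sign π * ∏ r, N (τ (π r)) r) := by
        rw [Finset.sum_comm, Finset.sum_congr rfl fun π _ => sum_perm π]
    _ = ∑ τ : ι → C, (M.submatrix id τ).det * (N.submatrix τ id).det := by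
        simp only [det_apply' (N.submatrix _ id), Finset.mul_sum, submatrix_apply, id_eq]

end CauchyBinet

theorem re_det_mul_diagonal_mul_conjTranspose {ι C 𝕜 : Type*} [Fintype ι] [DecidableEq ι]
    [Fintype C] [DecidableEq C] [RCLike 𝕜] (W : Matrix ι C 𝕜) (d : C → ℝ) :
    RCLike.re (W * diagonal (fun c => (d c : 𝕜)) * Wᴴ).det =
      ∑ τ : ι → C, ‖(W.submatrix id τ).det‖ ^ 2 / (Fintype.card ι).factorial * ∏ r, d (τ r) := by
  have hminor (τ : ι → C) : (diagonal (fun c => (d c : 𝕜)) * Wᴴ).submatrix τ id =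
      diagonal (fun r => (d (τ r) : 𝕜)) * (W.submatrix id τ)ᴴ := by
    ext r s
    simp [Matrix.diagonal_mul]
  have hdet : ((Fintype.card ι).factorial : 𝕜) * (W * diagonal (fun c => (d c : 𝕜)) * Wᴴ).det =
      ((∑ τ : ι → C, ‖(W.submatrix id τ).det‖ ^ 2 * ∏ r, d (τ r) : ℝ) : 𝕜) := by
    rw [Matrix.mul_assoc, factorial_mul_det_mul_eq_sum_det_mul_det, RCLike.ofReal_sum]
    refine Finset.sum_congr rfl fun τ _ => ?_
    rw [hminor, det_mul, det_diagonal, det_conjTranspose, RCLike.star_def, mul_left_comm,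
      RCLike.mul_conj]
    push_cast
    ring
  have hre := congrArg RCLike.re hdet
  rw [RCLike.ofReal_re, ← RCLike.ofReal_natCast, RCLike.re_ofReal_mul] at hre
  have hfact : ((Fintype.card ι).factorial : ℝ) ≠ 0 := by positivity
  rw [eq_div_of_mul_eq hfact ((mul_comm _ _).trans hre), Finset.sum_div]
  simp_rw [div_mul_eq_mul_div]

theorem tendsto_log_sum_mul_exp_div_atTop {κ : Type*} [Fintype κ] {a b : κ → ℝ} (ha : ∀ j, 0 ≤ a j)
    {k : κ} (hk : 0 < a k) (hmax : ∀ j, a j ≠ 0 → b j ≤ b k) :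
    Tendsto (fun t : ℝ => Real.log (∑ j, a j * Real.exp (t * b j)) / t) atTop (𝓝 (b k)) := by
  have hsum : 0 < ∑ j, a j := Finset.sum_pos' (fun j _ => ha j) ⟨k, Finset.mem_univ k, hk⟩
  have log_div {x t : ℝ} (hx : 0 < x) (ht : 0 < t) :
      Real.log (x * Real.exp (t * b k)) / t = Real.log x / t + b k := by
    rw [Real.log_mul hx.ne' (Real.exp_pos _).ne', Real.log_exp]
    field_simp
  have limit (x : ℝ) : Tendsto (fun t : ℝ => Real.log x / t + b k) atTop (𝓝 (b k)) := by
    simpa using (tendsto_const_nhds.div_atTop tendsto_id).add_const (b k)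
  refine tendsto_of_tendsto_of_tendsto_of_le_of_le' (limit (a k)) (limit (∑ j, a j)) ?_ ?_
  all_goals filter_upwards [eventually_gt_atTop 0] with t ht
  · have lower : a k * Real.exp (t * b k) ≤ ∑ j, a j * Real.exp (t * b j) :=
      Finset.single_le_sum (f := fun j => a j * Real.exp (t * b j))
        (fun j _ => mul_nonneg (ha j) (Real.exp_pos _).le) (Finset.mem_univ k)
    rw [← log_div hk ht]
    gcongr
  · have sum_pos : 0 < ∑ j, a j * Real.exp (t * b j) :=
      Finset.sum_pos' (fun j _ => mul_nonneg (ha j) (Real.exp_pos _).le)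
        ⟨k, Finset.mem_univ k, mul_pos hk (Real.exp_pos _)⟩
    have upper : ∑ j, a j * Real.exp (t * b j) ≤ (∑ j, a j) * Real.exp (t * b k) := by
      rw [Finset.sum_mul]
      refine Finset.sum_le_sum fun j _ => ?_
      rcases eq_or_ne (a j) 0 with h0 | h0
      · simp [h0]
      · exact mul_le_mul_of_nonneg_left
          (Real.exp_le_exp.2 (mul_le_mul_of_nonneg_left (hmax j h0) ht.le)) (ha j)
    rw [← log_div hsum ht]
    gcongr

/-- The columns `W.col (σ r)` form a nonsingular maximal minor of `W`, whose total weight is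
largest among all nonsingular maximal minors: a maximum-weight basis of the column matroid. A minor
is encoded by the map `σ` listing its columns. -/
structure IsMaxWeightMinor {ι C R α : Type*} [Fintype ι] [DecidableEq ι] [CommRing R]
    [AddCommMonoid α] [LE α] (W : Matrix ι C R) (w : C → α) (σ : ι → C) : Prop where
  det_ne_zero : (W.submatrix id σ).det ≠ 0
  sum_weight_le : ∀ τ : ι → C, (W.submatrix id τ).det ≠ 0 → ∑ r, w (τ r) ≤ ∑ r, w (σ r)

theorem exists_isMaxWeightMinor {ι C R α : Type*} [Fintype ι] [DecidableEq ι] [Finite C]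
    [CommRing R] [AddCommMonoid α] [LinearOrder α] {W : Matrix ι C R}
    (hW : ∃ τ : ι → C, (W.submatrix id τ).det ≠ 0) (w : C → α) :
    ∃ σ, IsMaxWeightMinor W w σ := by
  obtain ⟨σ, hσ, hmax⟩ := Set.exists_max_image {τ : ι → C | (W.submatrix id τ).det ≠ 0}
    (fun τ => ∑ r, w (τ r)) (Set.toFinite _) hW
  exact ⟨σ, hσ, hmax⟩

theorem det_submatrix_smul_col {ι C R : Type*} [Fintype ι] [DecidableEq ι] [CommRing R]
    (W : Matrix ι C R) (σ : ι → C) (c : C) :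
    (W.submatrix id σ).det • W.col c =
      ∑ r, (W.submatrix id (Function.update σ r c)).det • W.col (σ r) := by
  have hcramer (r : ι) : (W.submatrix id (Function.update σ r c)).det =
      cramer (W.submatrix id σ) (W.col c) r := by
    rw [cramer_apply]
    congr 1
    ext i s
    rcases eq_or_ne s r with rfl | hs <;> simp [*]
  rw [← mulVec_cramer, mulVec_eq_sum]
  simp_rw [hcramer, op_smul_eq_smul]
  rfl

namespace IsMaxWeightMinor

variable {ι C α : Type*} [Fintype ι] [DecidableEq ι]
  [AddCommMonoid α] [PartialOrder α] [IsOrderedCancelAddMonoid α] {w : C → α} {σ : ι → C}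

theorem weight_le_of_det_update_ne_zero {R : Type*} [CommRing R] {W : Matrix ι C R}
    (hσ : IsMaxWeightMinor W w σ) {r : ι} {c : C}
    (h : (W.submatrix id (Function.update σ r c)).det ≠ 0) : w c ≤ w (σ r) := by
  have hsum := hσ.sum_weight_le _ h
  have herase : ∑ s ∈ Finset.univ.erase r, w (Function.update σ r c s) =
      ∑ s ∈ Finset.univ.erase r, w (σ s) :=
    Finset.sum_congr rfl fun s hs => by rw [Function.update_of_ne (Finset.ne_of_mem_erase hs)]
  rw [← Finset.add_sum_erase _ _ (Finset.mem_univ r),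
    ← Finset.add_sum_erase _ (fun s => w (σ s)) (Finset.mem_univ r), herase,
    Function.update_self] at hsum
  exact le_of_add_le_add_right hsum

theorem span_col_le_weight {K : Type*} [Field K] {W : Matrix ι C K}
    (hσ : IsMaxWeightMinor W w σ) (a : α) :
    Submodule.span K (W.col '' {c | a ≤ w c}) =
      Submodule.span K ((W.submatrix id σ).col '' {r | a ≤ w (σ r)}) := by
  refine le_antisymm (Submodule.span_le.2 ?_) (Submodule.span_mono ?_)
  · rintro _ ⟨c, hc, rfl⟩
    rw [SetLike.mem_coe, ← Submodule.smul_mem_iff _ hσ.det_ne_zero, det_submatrix_smul_col]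
    refine Submodule.sum_mem _ fun r _ => ?_
    rcases eq_or_ne (W.submatrix id (Function.update σ r c)).det 0 with h0 | h0
    · simp [h0]
    · exact Submodule.smul_mem _ _ (Submodule.subset_span
        ⟨r, le_trans hc (hσ.weight_le_of_det_update_ne_zero h0), rfl⟩)
  · rintro _ ⟨r, hr, rfl⟩
    exact ⟨σ r, hr, rfl⟩

end IsMaxWeightMinor

theorem finrank_span_col_image {ι K : Type*} [Fintype ι] [DecidableEq ι] [Field K]
    {B : Matrix ι ι K} (hB : B.det ≠ 0) (p : ι → Prop) [DecidablePred p] :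
    Module.finrank K (Submodule.span K (B.col '' {r | p r})) = Finset.card {r | p r} := by
  have hli : LinearIndependent K B.col := by
    rw [linearIndependent_cols_iff_isUnit, isUnit_iff_isUnit_det]
    exact hB.isUnit
  have hsub : LinearIndependent K fun r : {r // p r} => B.col r :=
    hli.comp _ Subtype.val_injective
  rw [Set.image_eq_range, ← Fintype.card_subtype]
  exact finrank_span_eq_card hsub

theorem IsMaxWeightMinor.tendsto_log_det_div_atTop {ι C 𝕜 : Type*} [Fintype ι] [DecidableEq ι]
    [Fintype C] [DecidableEq C] [RCLike 𝕜] {W : Matrix ι C 𝕜} {w : C → ℝ} {σ : ι → C}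
    (hσ : IsMaxWeightMinor W w σ) :
    Tendsto (fun t : ℝ => Real.log (RCLike.re
        (W * diagonal (fun c => ((Real.exp (t * w c) : ℝ) : 𝕜)) * Wᴴ).det) / t)
      atTop (𝓝 (∑ r, w (σ r))) := by
  simp_rw [re_det_mul_diagonal_mul_conjTranspose, ← Real.exp_sum, ← Finset.mul_sum]
  have hfact : (0 : ℝ) < (Fintype.card ι).factorial := by positivity
  refine tendsto_log_sum_mul_exp_div_atTop (k := σ) (b := fun τ => ∑ r, w (τ r))
    (a := fun τ => ‖(W.submatrix id τ).det‖ ^ 2 / (Fintype.card ι).factorial)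
    (fun τ => div_nonneg (sq_nonneg _) hfact.le)
    (div_pos (pow_pos (norm_pos_iff.2 hσ.det_ne_zero) 2) hfact) ?_
  intro τ hτ
  exact hσ.sum_weight_le τ fun h0 => hτ (by simp [h0])

section AbelSummation

/-- The sequence `λ_1, …, λ_n` prolonged by `λ_i := 0` for `i > n`, with indices shifted to start
at `0`; this is how the boundary term `λ_{n+1} = 0` enters the Abel summation. -/
def zeroExtend {α : Type*} [Zero α] {n : ℕ} (eig : Fin n → α) (i : ℕ) : α :=
  if h : i < n then eig ⟨i, h⟩ else 0

theorem zeroExtend_val {α : Type*} [Zero α] {n : ℕ} (eig : Fin n → α) (i : Fin n) :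
    zeroExtend eig i = eig i := by
  simp [zeroExtend]

theorem sum_zeroExtend_sub_mul_card {ι R : Type*} [Fintype ι] [Ring R] {n : ℕ} (eig : Fin n → R)
    (τ : ι → Fin n) :
    ∑ i ∈ Finset.range n, (zeroExtend eig i - zeroExtend eig (i + 1)) *
        (Finset.card {r | (τ r : ℕ) < i + 1} : R) = ∑ r, eig (τ r) := by
  have telescope (j : Fin n) : ∑ i ∈ Finset.range n,
      (if (j : ℕ) < i + 1 then zeroExtend eig i - zeroExtend eig (i + 1) else 0) = eig j := by
    have hfilter : (Finset.range n).filter (fun i => (j : ℕ) < i + 1) = Finset.Ico (j : ℕ) n := by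
      ext i
      simp only [Finset.mem_filter, Finset.mem_range, Finset.mem_Ico]
      omega
    have hneg := Finset.sum_Ico_sub (zeroExtend eig) j.is_lt.le
    rw [← Finset.sum_filter, hfilter, ← neg_inj, ← Finset.sum_neg_distrib]
    simpa [zeroExtend] using hneg
  simp_rw [← telescope, Finset.card_filter, Nat.cast_sum, Finset.mul_sum]
  rw [Finset.sum_comm]
  simp

theorem apply_le_apply_iff_of_zeroExtend_ne {α : Type*} [Zero α] [PartialOrder α] {n : ℕ}
    {eig : Fin n → α} (heig : Antitone eig) {i : Fin n}
    (hi : zeroExtend eig i ≠ zeroExtend eig (i + 1)) (j : Fin n) :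
    eig i ≤ eig j ↔ (j : ℕ) < i + 1 := by
  refine ⟨fun hij => ?_, fun hji => heig (Nat.lt_succ_iff.1 hji)⟩
  by_contra! hlt
  let i' : Fin n := ⟨i + 1, hlt.trans_lt j.is_lt⟩
  have hle : eig i ≤ eig i' := hij.trans (heig (show i' ≤ j from hlt))
  have hge : eig i' ≤ eig i := heig (Nat.le_succ i)
  exact hi ((zeroExtend_val eig i).trans
    ((le_antisymm hle hge).trans (zeroExtend_val eig i').symm))

/-- Only the thresholds `i` with `λ_i > λ_{i+1}` matter, and for these the columns of level at most
`i` are exactly those of weight at least `λ_i`. -/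
theorem IsMaxWeightMinor.sum_zeroExtend_sub_mul_finrank {ι C K : Type*} [Fintype ι] [DecidableEq ι]
    [Field K] {R : Type*} [Ring R] [LinearOrder R] [IsOrderedCancelAddMonoid R] {n : ℕ}
    {W : Matrix ι C K} {lev : C → Fin n} {eig : Fin n → R} {σ : ι → C}
    (hσ : IsMaxWeightMinor W (fun c => eig (lev c)) σ) (heig : Antitone eig) :
    ∑ i ∈ Finset.range n, (zeroExtend eig i - zeroExtend eig (i + 1)) *
        (Module.finrank K (Submodule.span K (W.col '' {c | (lev c : ℕ) < i + 1})) : R) =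
      ∑ r, eig (lev (σ r)) := by
  rw [← sum_zeroExtend_sub_mul_card eig fun r => lev (σ r)]
  refine Finset.sum_congr rfl fun i hi => ?_
  rcases eq_or_ne (zeroExtend eig i) (zeroExtend eig (i + 1)) with heq | hne
  · simp [heq]
  · lift i to Fin n using Finset.mem_range.1 hi
    have level_iff := apply_le_apply_iff_of_zeroExtend_ne heig hne
    have hspan := hσ.span_col_le_weight (eig i)
    simp_rw [level_iff] at hspan
    rw [hspan, finrank_span_col_image hσ.det_ne_zero]

end AbelSummation

/-- The block row `(B₁, B₂, …)` of a family of matrices, with columns indexed by pairs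
(block, column in that block). -/
def blockRow {κ ι ι' R : Type*} (B : κ → Matrix ι ι' R) : Matrix ι (κ × ι') R :=
  of fun r c => B c.1 r c.2

theorem blockRow_mul_diagonal_mul_conjTranspose {κ ι ι' R : Type*} [Fintype κ] [Fintype ι']
    [DecidableEq κ] [DecidableEq ι'] [Semiring R] [StarRing R] (B : κ → Matrix ι ι' R)
    (d : ι' → R) :
    blockRow B * diagonal (fun c : κ × ι' => d c.2) * (blockRow B)ᴴ =
      ∑ k, B k * diagonal d * (B k)ᴴ := by
  ext r s
  simp [Matrix.mul_apply (N := (_)ᴴ), Fintype.sum_prod_type, Matrix.sum_apply, blockRow]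

theorem exp_smul_conj_diagonal {ι : Type*} [Fintype ι] [DecidableEq ι] {u : Matrix ι ι ℂ}
    (hu : u ∈ unitaryGroup ι ℂ) (eig : ι → ℝ) (t : ℝ) :
    NormedSpace.exp (t • (u * diagonal (fun i => (eig i : ℂ)) * uᴴ)) =
      u * diagonal (fun i => ((Real.exp (t * eig i) : ℝ) : ℂ)) * uᴴ := by
  have huu : u * uᴴ = 1 := mem_unitaryGroup_iff.1 hu
  rw [← inv_eq_right_inv huu, ← Matrix.smul_mul, ← Matrix.mul_smul,
    exp_conj _ _ (IsUnit.of_mul_eq_one _ huu), ← diagonal_smul, exp_diagonal]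
  congr 3
  ext i
  simp [Pi.coe_exp, ← Complex.exp_eq_exp_ℂ]

theorem log_det_conj_diagonal_exp {ι : Type*} [Fintype ι] [DecidableEq ι] {u : Matrix ι ι ℂ}
    (hu : u ∈ unitaryGroup ι ℂ) (eig : ι → ℝ) (t : ℝ) :
    Real.log (u * diagonal (fun i => ((Real.exp (t * eig i) : ℝ) : ℂ)) * uᴴ).det.re =
      t * ∑ i, eig i := by
  have huu : u * uᴴ = 1 := mem_unitaryGroup_iff.1 hu
  rw [← inv_eq_right_inv huu, det_conj (IsUnit.of_mul_eq_one _ huu), det_diagonal,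
    ← Complex.ofReal_prod, Complex.ofReal_re, ← Real.exp_sum, Real.log_exp, Finset.mul_sum]

section Recession

variable {m n : ℕ} (A : Fin m → Matrix (Fin n) (Fin n) ℂ) (u : Matrix (Fin n) (Fin n) ℂ)

theorem colSpan_eq_span_col_image (j : ℕ) :
    colSpan u j = Submodule.span ℂ (u.col '' {k | (k : ℕ) < j}) := by
  simp only [colSpan, Set.image, Set.mem_ofPred_eq, eq_comm]
  rfl

theorem ASpan_colSpan_eq_span_col_image (j : ℕ) :
    ASpan A (colSpan u j) =
      Submodule.span ℂ ((blockRow fun k => A k * u).col '' {c | (c.2 : ℕ) < j}) := by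
  rw [colSpan_eq_span_col_image]
  refine le_antisymm (iSup_le fun k => ?_) (Submodule.span_le.2 ?_)
  · rw [Submodule.map_span, Submodule.span_le]
    rintro _ ⟨_, ⟨l, hl, rfl⟩, rfl⟩
    exact Submodule.subset_span ⟨(k, l), hl, rfl⟩
  · rintro _ ⟨⟨k, l⟩, hl, rfl⟩
    exact Submodule.mem_iSup_of_mem k ⟨_, Submodule.subset_span ⟨l, hl, rfl⟩, rfl⟩

theorem Tcp_conj_diagonal (d : Fin n → ℂ) :
    Tcp A (u * diagonal d * uᴴ) =
      (blockRow fun k => A k * u) * diagonal (fun c : Fin m × Fin n => d c.2) *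
        (blockRow fun k => A k * u)ᴴ := by
  rw [blockRow_mul_diagonal_mul_conjTranspose, Tcp]
  simp only [conjTranspose_mul, Matrix.mul_assoc]

variable {A u}

theorem exists_isMaxWeightMinor_blockRow {α : Type*} [AddCommMonoid α] [LinearOrder α]
    (hA : (∑ k, A k * (A k)ᴴ).det ≠ 0) (hu : u ∈ unitaryGroup (Fin n) ℂ)
    (w : Fin m × Fin n → α) : ∃ σ, IsMaxWeightMinor (blockRow fun k => A k * u) w σ := by
  have huu : u * uᴴ = 1 := mem_unitaryGroup_iff.1 hu
  have hmul : (blockRow fun k => A k * u) * (blockRow fun k => A k * u)ᴴ =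
      ∑ k, A k * (A k)ᴴ := by
    simpa [huu, Tcp] using (Tcp_conj_diagonal A u 1).symm
  exact exists_isMaxWeightMinor (exists_det_submatrix_ne_zero (hmul ▸ hA)) w

theorem tendsto_fdet_exp_smul_div_atTop (hu : u ∈ unitaryGroup (Fin n) ℂ) {eig : Fin n → ℝ}
    {σ : Fin n → Fin m × Fin n}
    (hσ : IsMaxWeightMinor (blockRow fun k => A k * u) (fun c => eig c.2) σ) :
    Tendsto (fun t : ℝ =>
        fdet A (NormedSpace.exp (t • (u * diagonal (fun i => (eig i : ℂ)) * uᴴ))) / t)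
      atTop (𝓝 (∑ r, eig (σ r).2 - ∑ i, eig i)) := by
  refine (hσ.tendsto_log_det_div_atTop.sub_const (∑ i, eig i)).congr' ?_
  filter_upwards [eventually_ne_atTop 0] with t ht
  rw [exp_smul_conj_diagonal hu, fdet, log_det_conj_diagonal_exp hu, sub_div,
    mul_div_cancel_left₀ _ ht, Tcp_conj_diagonal]
  rfl

theorem sum_zeroExtend_sub_mul_finrank_ASpan_sub (hu : u.det ≠ 0) {eig : Fin n → ℝ}
    (heig : Antitone eig) {σ : Fin n → Fin m × Fin n}
    (hσ : IsMaxWeightMinor (blockRow fun k => A k * u) (fun c => eig c.2) σ) :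
    ∑ i ∈ Finset.range n, (zeroExtend eig i - zeroExtend eig (i + 1)) *
        ((Module.finrank ℂ (ASpan A (colSpan u (i + 1))) : ℝ) -
          (Module.finrank ℂ (colSpan u (i + 1)) : ℝ)) =
      ∑ r, eig (σ r).2 - ∑ i, eig i := by
  rw [← hσ.sum_zeroExtend_sub_mul_finrank heig, ← sum_zeroExtend_sub_mul_card eig fun i => i,
    ← Finset.sum_sub_distrib]
  refine Finset.sum_congr rfl fun i _ => ?_
  rw [ASpan_colSpan_eq_span_col_image, colSpan_eq_span_col_image,
    finrank_span_col_image hu fun k => (k : ℕ) < i + 1, mul_sub]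

end Recession

/-- The recession function of `f` at `H = u (diag λ) uᴴ`, with `λ₁ ≥ ⋯ ≥ λₙ` and
`λ_{n+1} := 0`, equals `∑ i, (λ_i - λ_{i+1}) (dim 𝒜U_i - dim U_i)`, where `U_i` is the
span of the first `i` columns of `u`. -/
theorem fdet_recession_formula {m n : ℕ} (A : Fin m → Matrix (Fin n) (Fin n) ℂ)
    (hA : (∑ k, A k * (A k)ᴴ).PosDef)
    (u : Matrix (Fin n) (Fin n) ℂ) (hu : u ∈ Matrix.unitaryGroup (Fin n) ℂ)
    (eig : Fin n → ℝ) (heig : Antitone eig)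
    (H : Matrix (Fin n) (Fin n) ℂ)
    (hH : H = u * Matrix.diagonal (fun i => (eig i : ℂ)) * uᴴ) :
    Tendsto (fun t : ℝ => (fdet A (NormedSpace.exp (t • H)) - fdet A 1) / t) atTop
      (𝓝 (∑ i ∈ Finset.range n,
        ((if h : i < n then eig ⟨i, h⟩ else 0) - (if h : i + 1 < n then eig ⟨i + 1, h⟩ else 0))
          * ((Module.finrank ℂ (ASpan A (colSpan u (i + 1))) : ℝ)
              - (Module.finrank ℂ (colSpan u (i + 1)) : ℝ)))) := by
  have hudet : u.det ≠ 0 := (UnitaryGroup.det_isUnit ⟨u, hu⟩).ne_zero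
  obtain ⟨σ, hσ⟩ := exists_isMaxWeightMinor_blockRow hA.det_pos.ne' hu fun c => eig c.2
  have hlim := (tendsto_fdet_exp_smul_div_atTop hu hσ).sub
    ((tendsto_const_nhds (x := fdet A 1)).div_atTop tendsto_id)
  rw [sub_zero, ← sum_zeroExtend_sub_mul_finrank_ASpan_sub hudet heig hσ, ← hH] at hlim
  exact hlim.congr fun t => (sub_div _ _ _).symm
end
end
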